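/- arXiv:1605.03558 — 2 statements merged into one kernel-verified Lean document; each statement's English description precedes it below -/
import Mathlib

section
/- Let n ≥ 1, R > 0 and Ω = B(0,R) ⊂ ℝⁿ. Assume the standing hypotheses on f and V, with f moreover of class C² and convex on [0,∞), and with any exponent p > 1. Assume V is radially symmetric (V(x) depends only on |x|). Let T > 0 and let u be a nonnegative classical solution of u_t = Δu + V(x)f(u) on (0,T)×Ω such that ∂_t u ≥ 0 everywhere and u is radially symmetric (u(t,x) depends only on t and |x|). Let x₀ ∈ Ω satisfy V(x₀) = 0 and assume that the connected component of the zero set {x ∈ closure(Ω) : V(x) = 0} containing x₀ does not intersect ∂Ω. Then x₀ is not a blowup point of u; that is, there exist r > 0 and M > 0 such that u(t,x) ≤ M for all t ∈ (T/2,T) and all x ∈ Ω with |x−x₀| < r. -/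
open Set Metric Filter

noncomputable def lap {n : ℕ} (g : EuclideanSpace ℝ (Fin n) → ℝ)
    (x : EuclideanSpace ℝ (Fin n)) : ℝ :=
  ∑ i : Fin n, fderiv ℝ (fun y => fderiv ℝ g y (EuclideanSpace.single i 1)) x
    (EuclideanSpace.single i 1)

/-- `g` is twice differentiable at `0`, with first and second derivatives `a`, `b` there. -/
def HasSecond (g : ℝ → ℝ) (a b : ℝ) : Prop :=
  ∃ g' : ℝ → ℝ, (∀ᶠ s in nhds (0:ℝ), HasDerivAt g (g' s) s) ∧ g' 0 = a ∧ HasDerivAt g' b 0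

theorem HasSecond.sub {g k : ℝ → ℝ} {a b c d : ℝ} (hg : HasSecond g a b) (hk : HasSecond k c d) :
    HasSecond (fun s => g s - k s) (a - c) (b - d) := by
  obtain ⟨g', h1, h2, h3⟩ := hg
  obtain ⟨k', l1, l2, l3⟩ := hk
  refine ⟨fun s => g' s - k' s, ?_, by simp [h2, l2], h3.sub l3⟩
  filter_upwards [h1, l1] with s hs ls using hs.sub ls

theorem HasSecond.const_mul {g : ℝ → ℝ} {a b : ℝ} (c : ℝ) (hg : HasSecond g a b) :
    HasSecond (fun s => c * g s) (c * a) (c * b) := by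
  obtain ⟨g', h1, h2, h3⟩ := hg
  refine ⟨fun s => c * g' s, ?_, by simp [h2], h3.const_mul c⟩
  filter_upwards [h1] with s hs using hs.const_mul c

theorem HasSecond.mul {g k : ℝ → ℝ} {a b c d : ℝ} (hg : HasSecond g a b) (hk : HasSecond k c d) :
    HasSecond (fun s => g s * k s) (a * k 0 + g 0 * c) (b * k 0 + 2 * a * c + g 0 * d) := by
  obtain ⟨g', h1, h2, h3⟩ := hg
  obtain ⟨k', l1, l2, l3⟩ := hk
  refine ⟨fun s => g' s * k s + g s * k' s, ?_, by simp [h2, l2], ?_⟩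
  · filter_upwards [h1, l1] with s hs ls using hs.mul ls
  · have := (h3.mul l1.self_of_nhds).add (h1.self_of_nhds.mul l3)
    refine HasDerivAt.congr_deriv this ?_
    rw [h2, l2]; ring

theorem HasSecond.continuousAt {g : ℝ → ℝ} {a b : ℝ} (hg : HasSecond g a b) :
    ContinuousAt g 0 := by
  obtain ⟨g', h1, h2, h3⟩ := hg
  exact h1.self_of_nhds.continuousAt

theorem HasSecond.comp {φ φ' : ℝ → ℝ} {c : ℝ} {g : ℝ → ℝ} {a b : ℝ}
    (hφ : ∀ᶠ y in nhds (g 0), HasDerivAt φ (φ' y) y) (hφ' : HasDerivAt φ' c (g 0))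
    (hg : HasSecond g a b) :
    HasSecond (fun s => φ (g s)) (φ' (g 0) * a) (c * a ^ 2 + φ' (g 0) * b) := by
  have hc := hg.continuousAt
  obtain ⟨g', h1, h2, h3⟩ := hg
  refine ⟨fun s => φ' (g s) * g' s, ?_, by simp [h2], ?_⟩
  · filter_upwards [h1, hc.eventually hφ] with s hs ls using ls.comp s hs
  · have := (hφ'.comp (0:ℝ) h1.self_of_nhds).mul h3
    refine HasDerivAt.congr_deriv this ?_
    simp only [Function.comp, h2]; ring

theorem HasSecond.rpow {g : ℝ → ℝ} {a b : ℝ} (q : ℝ) (hg : HasSecond g a b) (h0 : 0 < g 0) :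
    HasSecond (fun s => g s ^ q) (q * g 0 ^ (q - 1) * a)
      (q * (q - 1) * g 0 ^ (q - 2) * a ^ 2 + q * g 0 ^ (q - 1) * b) := by
  have := HasSecond.comp (φ := fun y => y ^ q) (φ' := fun y => q * y ^ (q - 1))
    (c := q * ((q - 1) * g 0 ^ (q - 1 - 1))) (g := g) (a := a) (b := b) ?_ ?_ hg
  · convert this using 1
    rw [show q - 1 - 1 = q - 2 by ring]; ring
  · filter_upwards [lt_mem_nhds h0] with y hy
    exact Real.hasDerivAt_rpow_const (Or.inl hy.ne')
  · exact (Real.hasDerivAt_rpow_const (Or.inl h0.ne')).const_mul q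

theorem HasSecond.nonneg_of_isLocalMin {g : ℝ → ℝ} {a b : ℝ} (hg : HasSecond g a b)
    (hm : IsLocalMin g 0) : 0 ≤ b := by
  have hc := hg.continuousAt
  obtain ⟨g', h1, h2, h3⟩ := hg
  by_contra hb
  push Not at hb
  have hd : deriv g =ᶠ[nhds 0] g' := by
    filter_upwards [h1] with s hs using hs.deriv
  have hdd : deriv (deriv g) 0 = b := by rw [hd.deriv_eq, h3.deriv]
  have hd0 : deriv g 0 = 0 := hm.deriv_eq_zero
  have hM : IsLocalMax g 0 := isLocalMax_of_deriv_deriv_neg (by rw [hdd]; exact hb) hd0 hc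
  have hcst : g =ᶠ[nhds 0] fun _ => g 0 := by
    filter_upwards [hm, hM] with s h1 h2 using le_antisymm h2 h1
  have h5 : deriv g =ᶠ[nhds 0] deriv (fun _ => g 0) := hcst.deriv
  have : deriv (deriv g) 0 = 0 := by
    rw [h5.deriv_eq]; simp
  rw [hdd] at this
  linarith

section
variable {n : ℕ}

theorem hasSecond_of_contDiffAt {g : EuclideanSpace ℝ (Fin n) → ℝ} {x : EuclideanSpace ℝ (Fin n)}
    (hg : ContDiffAt ℝ 2 g x) (i : Fin n) :
    HasSecond (fun s : ℝ => g (x + s • EuclideanSpace.single i 1))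
      (fderiv ℝ g x (EuclideanSpace.single i 1))
      (fderiv ℝ (fun y => fderiv ℝ g y (EuclideanSpace.single i 1)) x
        (EuclideanSpace.single i 1)) := by
  set e : EuclideanSpace ℝ (Fin n) := EuclideanSpace.single i 1
  have hline : ∀ s : ℝ, HasDerivAt (fun s : ℝ => x + s • e) e s := fun s => by
    simpa using ((hasDerivAt_id s).smul_const e).const_add x
  have hcont : Tendsto (fun s : ℝ => x + s • e) (nhds 0) (nhds x) := by
    have := (hline 0).continuousAt.tendsto
    simpa using this
  refine ⟨fun s => fderiv ℝ g (x + s • e) e, ?_, by simp, ?_⟩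
  · have h1 : ∀ᶠ y in nhds x, DifferentiableAt ℝ g y := by
      have := hg.eventually (by simp)
      filter_upwards [this] with y hy using hy.differentiableAt (by norm_num)
    filter_upwards [hcont.eventually h1] with s hs
    exact hs.hasFDerivAt.comp_hasDerivAt s (hline s)
  · have h2 : ContDiffAt ℝ 1 (fderiv ℝ g) x := hg.fderiv_right (by norm_num)
    have h3 : DifferentiableAt ℝ (fun y => fderiv ℝ g y e) x :=
      (h2.differentiableAt (by norm_num)).clm_apply (differentiableAt_const e)
    have h4 := h3.hasFDerivAt
    have h5 : HasFDerivAt (fun y => fderiv ℝ g y e) (fderiv ℝ (fun y => fderiv ℝ g y e) x)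
      (x + (0:ℝ) • e) := by simpa using h4
    exact h5.comp_hasDerivAt (0:ℝ) (hline 0)

/-- A minimum principle. -/
theorem min_principle (S : Set (ℝ × EuclideanSpace ℝ (Fin n))) (hS : IsCompact S)
    (J : ℝ → EuclideanSpace ℝ (Fin n) → ℝ) (hJ : ContinuousOn (fun q => J q.1 q.2) S) (L : ℝ)
    (h : ∀ t x, (t, x) ∈ S → J t x < 0 →
      (∀ᶠ s in nhdsWithin t (Iio t), (s, x) ∈ S) ∧ (∀ᶠ y in nhds x, (t, y) ∈ S) ∧
      ∃ Jt : ℝ, ∃ D1 D : Fin n → ℝ, HasDerivAt (fun s => J s x) Jt t ∧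
        (∀ i, HasSecond (fun s : ℝ => J t (x + s • EuclideanSpace.single i 1)) (D1 i) (D i)) ∧
        L * J t x < Jt - ∑ i, D i) :
    ∀ t x, (t, x) ∈ S → 0 ≤ J t x := by
  intro t₁ x₁ h₁
  by_contra hneg
  push Not at hneg
  have hcont : ContinuousOn (fun q : ℝ × EuclideanSpace ℝ (Fin n) =>
      Real.exp (-L * q.1) * J q.1 q.2) S := by
    refine ContinuousOn.mul ?_ hJ
    exact (Continuous.continuousOn (by fun_prop))
  obtain ⟨⟨t, x⟩, hm, hmin⟩ := hS.exists_isMinOn ⟨_, h₁⟩ hcont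
  have hmin' : ∀ s y, (s, y) ∈ S →
      Real.exp (-L * t) * J t x ≤ Real.exp (-L * s) * J s y := fun s y hy => hmin hy
  have hJneg : J t x < 0 := by
    have h2 := hmin' _ _ h₁
    have h3 : Real.exp (-L * t₁) * J t₁ x₁ < 0 := mul_neg_of_pos_of_neg (Real.exp_pos _) hneg
    by_contra h4
    push Not at h4
    have := mul_nonneg (Real.exp_pos (-L * t)).le h4
    linarith
  obtain ⟨ht, hx, Jt, D1, D, hJt, hD, hlt⟩ := h t x hm hJneg
  have hDn : ∀ i, 0 ≤ D i := by
    intro i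
    refine (hD i).nonneg_of_isLocalMin ?_
    have hcont : Tendsto (fun s : ℝ => x + s • (EuclideanSpace.single i 1 : EuclideanSpace ℝ (Fin n)))
        (nhds 0) (nhds x) := by
      have : Continuous (fun s : ℝ => x + s • (EuclideanSpace.single i 1 : EuclideanSpace ℝ (Fin n))) := by
        fun_prop
      simpa using this.tendsto 0
    filter_upwards [hcont.eventually hx] with s hs
    have := hmin' _ _ hs
    simpa using le_of_mul_le_mul_left this (Real.exp_pos _)
  have hexp : HasDerivAt (fun s => Real.exp (-L * s)) (Real.exp (-L * t) * (-L)) t := by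
    have : HasDerivAt (fun s => -L * s) (-L) t := by simpa using (hasDerivAt_id t).const_mul (-L)
    exact this.exp
  have hprod := hexp.mul hJt
  have htime : Real.exp (-L * t) * (-L) * J t x + Real.exp (-L * t) * Jt ≤ 0 := by
    have h6 := hprod.hasDerivWithinAt (s := Iio t)
    rw [hasDerivWithinAt_iff_tendsto_slope' (by simp)] at h6
    refine le_of_tendsto h6 ?_
    filter_upwards [ht, self_mem_nhdsWithin] with s hs hst
    rw [slope_def_field]
    have hst' : s < t := hst
    have := hmin' _ _ hs
    apply div_nonpos_of_nonneg_of_nonpos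
    · simp only [Pi.mul_apply]; linarith
    · linarith
  have h7 : Jt - L * J t x ≤ 0 := by
    have : Real.exp (-L * t) * (Jt - L * J t x) ≤ 0 := by linarith
    by_contra h8
    push Not at h8
    have := mul_pos (Real.exp_pos (-L * t)) h8
    linarith
  have h8 : 0 ≤ ∑ i, D i := Finset.sum_nonneg fun i _ => hDn i
  linarith

end


/-- The hypotheses on the solution, bundled. -/
structure Sol (n : ℕ) (R T : ℝ) (f : ℝ → ℝ) (V : EuclideanSpace ℝ (Fin n) → ℝ)
    (u : ℝ → EuclideanSpace ℝ (Fin n) → ℝ) : Prop where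
  nonneg : ∀ t ∈ Ioo 0 T, ∀ x ∈ ball (0 : EuclideanSpace ℝ (Fin n)) R, 0 ≤ u t x
  dt : ∀ t ∈ Ioo 0 T, ∀ x ∈ ball (0 : EuclideanSpace ℝ (Fin n)) R,
    DifferentiableAt ℝ (fun s => u s x) t
  dx : ∀ t ∈ Ioo 0 T, ∀ x ∈ ball (0 : EuclideanSpace ℝ (Fin n)) R,
    ContDiffAt ℝ 2 (fun y => u t y) x
  eq : ∀ t ∈ Ioo 0 T, ∀ x ∈ ball (0 : EuclideanSpace ℝ (Fin n)) R,
      deriv (fun s => u s x) t = lap (fun y => u t y) x + V x * f (u t x)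
  mono : ∀ t ∈ Ioo 0 T, ∀ x ∈ ball (0 : EuclideanSpace ℝ (Fin n)) R,
    0 ≤ deriv (fun s => u s x) t

section
variable {n : ℕ} {R T : ℝ} {f : ℝ → ℝ} {V : EuclideanSpace ℝ (Fin n) → ℝ}
    {u : ℝ → EuclideanSpace ℝ (Fin n) → ℝ}

theorem Sol.monotoneOn (h : Sol n R T f V u) {x : EuclideanSpace ℝ (Fin n)}
    (hx : x ∈ ball (0 : EuclideanSpace ℝ (Fin n)) R) :
    MonotoneOn (fun s => u s x) (Ioo 0 T) := by
  refine monotoneOn_of_deriv_nonneg (convex_Ioo 0 T) ?_ ?_ ?_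
  · exact fun t ht => (h.dt t ht x hx).continuousAt.continuousWithinAt
  · rw [interior_Ioo]
    exact fun t ht => (h.dt t ht x hx).differentiableWithinAt
  · rw [interior_Ioo]
    exact fun t ht => h.mono t ht x hx

theorem Sol.continuousAt (h : Sol n R T f V u) {t : ℝ} (ht : t ∈ Ioo 0 T)
    {x : EuclideanSpace ℝ (Fin n)}
    (hx : x ∈ ball (0 : EuclideanSpace ℝ (Fin n)) R) :
    ContinuousAt (fun q : ℝ × EuclideanSpace ℝ (Fin n) => u q.1 q.2) (t, x) := by
  rw [Metric.continuousAt_iff']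
  intro ε hε
  have hc := (h.dt t ht x hx).continuousAt
  rw [Metric.continuousAt_iff] at hc
  obtain ⟨δ, hδ, hc⟩ := hc (ε / 2) (by linarith)
  set η := min (δ / 2) (min (t / 2) ((T - t) / 2)) with hη
  have ht1 := ht.1
  have ht2 := ht.2
  have hη0 : 0 < η := by
    simp only [hη, lt_min_iff]; refine ⟨by linarith, by linarith, by linarith⟩
  have hη1 : η ≤ δ / 2 := min_le_left _ _
  have hη2 : η ≤ t / 2 := (min_le_right _ _).trans (min_le_left _ _)
  have hη3 : η ≤ (T - t) / 2 := (min_le_right _ _).trans (min_le_right _ _)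
  have hp : t + η ∈ Ioo 0 T := ⟨by linarith, by linarith⟩
  have hm : t - η ∈ Ioo 0 T := ⟨by linarith, by linarith⟩
  have h1 : dist (u (t + η) x) (u t x) < ε / 2 := hc (by
    rw [Real.dist_eq]; simp [abs_of_pos hη0]; linarith)
  have h2 : dist (u (t - η) x) (u t x) < ε / 2 := hc (by
    rw [Real.dist_eq]; simp [abs_of_pos hη0]; linarith)
  have c1 := (h.dx _ hp x hx).continuousAt
  have c2 := (h.dx _ hm x hx).continuousAt
  have e1 := Metric.continuousAt_iff'.1 c1 (ε / 2) (by linarith)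
  have e2 := Metric.continuousAt_iff'.1 c2 (ε / 2) (by linarith)
  have e3 : ∀ᶠ y in nhds x, y ∈ ball (0 : EuclideanSpace ℝ (Fin n)) R := isOpen_ball.mem_nhds hx
  have e4 : ∀ᶠ s in nhds t, s ∈ Ioo (t - η) (t + η) := Ioo_mem_nhds (by linarith) (by linarith)
  rw [nhds_prod_eq]
  filter_upwards [e4.prod_mk (e1.and (e2.and e3))] with ⟨s, y⟩ ⟨hs, hy1, hy2, hy3⟩
  simp only at hs hy1 hy2 hy3 ⊢
  have hsT : s ∈ Ioo 0 T := ⟨by linarith [hs.1], by linarith [hs.2]⟩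
  have m1 := h.monotoneOn hy3 hsT hp hs.2.le
  have m2 := h.monotoneOn hy3 hm hsT hs.1.le
  simp only at m1 m2
  rw [Real.dist_eq, abs_lt] at h1 h2 hy1 hy2 ⊢
  constructor <;> linarith [h1.1, h1.2, h2.1, h2.2, hy1.1, hy1.2, hy2.1, hy2.2]

end

theorem convex_slope_le {f : ℝ → ℝ} (hf : ConvexOn ℝ (Ici 0) f) {a b M : ℝ} (hb : 0 ≤ b)
    (hab : b ≤ a) (haM : a ≤ M) : f a - f b ≤ (f (M + 1) - f M) * (a - b) := by
  rcases hab.eq_or_lt with rfl | hlt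
  · simp
  have h1 : (f a - f b) / (a - b) ≤ (f (M + 1) - f a) / (M + 1 - a) :=
    hf.slope_mono_adjacent (mem_Ici.2 hb) (mem_Ici.2 (by linarith)) hlt (by linarith)
  have h2 : (f (M + 1) - f a) / (M + 1 - a) ≤ f (M + 1) - f M := by
    rcases haM.eq_or_lt with rfl | hlt2
    · simp
    have h3 : (f M - f a) / (M - a) ≤ (f (M + 1) - f M) / (M + 1 - M) :=
      hf.slope_mono_adjacent (mem_Ici.2 (by linarith)) (mem_Ici.2 (by linarith)) hlt2 (by linarith)
    rw [div_le_iff₀ (by linarith)] at h3 ⊢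
    have : M + 1 - M = 1 := by ring
    rw [this, div_one] at h3
    nlinarith
  have h3 := h1.trans h2
  rwa [div_le_iff₀ (by linarith)] at h3

theorem convex_tangent {f : ℝ → ℝ} (hf : ConvexOn ℝ (Ici 0) f) (hd : ContDiffOn ℝ 1 f (Ici 0))
    {a b : ℝ} (ha : 0 ≤ a) (hb : 0 < b) : deriv f b * (a - b) ≤ f a - f b := by
  have hdb : DifferentiableAt ℝ f b :=
    (hd.contDiffAt (Ici_mem_nhds hb)).differentiableAt (by norm_num)
  rcases lt_trichotomy a b with h | h | h
  · have := hf.slope_le_deriv (mem_Ici.2 ha) (mem_Ici.2 hb.le) h hdb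
    rw [slope_def_field, div_le_iff₀ (by linarith)] at this
    nlinarith
  · simp [h]
  · have := hf.deriv_le_slope (mem_Ici.2 hb.le) (mem_Ici.2 ha) h hdb
    rwa [slope_def_field, le_div_iff₀ (by linarith)] at this

theorem convex_slope_ge {f : ℝ → ℝ} (hf : ConvexOn ℝ (Ici 0) f) (hd : ContDiffOn ℝ 1 f (Ici 0)) :
    ∃ L : ℝ, 0 ≤ L ∧ ∀ a b : ℝ, 0 ≤ b → b ≤ a → -L * (a - b) ≤ f a - f b := by
  have hd0 : DifferentiableWithinAt ℝ f (Ici 0) 0 :=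
    (hd.differentiableOn (by norm_num)) 0 (by simp)
  set m := derivWithin f (Ici 0) 0 with hm
  have key : ∀ a : ℝ, 0 < a → m * a ≤ f a - f 0 := by
    intro a ha
    have := hf.le_slope_of_hasDerivWithinAt (x := 0) (y := a) (by simp) (mem_Ici.2 ha.le) ha
      hd0.hasDerivWithinAt
    rw [slope_def_field, le_div_iff₀ (by linarith)] at this
    simpa using this
  refine ⟨|m|, abs_nonneg _, ?_⟩
  intro a b hb hab
  have hm' := neg_abs_le m
  rcases hab.eq_or_lt with rfl | hlt
  · simp
  have : m * (a - b) ≤ f a - f b := by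
    rcases hb.eq_or_lt with rfl | hb0
    · simpa using key a hlt
    have h1 : (f b - f 0) / (b - 0) ≤ (f a - f b) / (a - b) :=
      hf.slope_mono_adjacent (by simp) (mem_Ici.2 (by linarith)) hb0 hlt
    have h2 : m ≤ (f b - f 0) / (b - 0) := by
      rw [le_div_iff₀ (by linarith)]; simpa using key b hb0
    have := h2.trans h1
    rwa [le_div_iff₀ (by linarith)] at this
  nlinarith

theorem f_upper {f : ℝ → ℝ} {p : ℝ}
    (hf_lim : Tendsto (fun s : ℝ => s ^ (-p) * f s) atTop (nhds 1)) :
    ∃ S : ℝ, 1 ≤ S ∧ ∀ s ≥ S, f s ≤ 2 * s ^ p := by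
  have h1 := hf_lim.eventually (gt_mem_nhds (show (1:ℝ) < 2 by norm_num))
  obtain ⟨S, hS⟩ := (h1.and (eventually_ge_atTop 1)).exists_forall_of_atTop
  refine ⟨max S 1, le_max_right _ _, fun s hs => ?_⟩
  obtain ⟨h2, h3⟩ := hS s ((le_max_left _ _).trans hs)
  have hs0 : (0:ℝ) < s := by linarith
  have hp := Real.rpow_pos_of_pos hs0 p
  rw [Real.rpow_neg hs0.le, inv_mul_lt_iff₀ hp] at h2
  linarith

theorem f_super {f : ℝ → ℝ} {p q : ℝ} (hp : 1 < p) (hq : q < p) (hf : ConvexOn ℝ (Ici 0) f)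
    (hd : ContDiffOn ℝ 1 f (Ici 0))
    (hf_lim : Tendsto (fun s : ℝ => s ^ (-p) * f s) atTop (nhds 1)) :
    ∃ S : ℝ, 1 ≤ S ∧ ∃ k > 0, ∀ s ≥ S, k * s ^ p ≤ s * deriv f s - q * f s := by
  -- choose the ratio
  have hder : HasDerivAt (fun y : ℝ => y ^ p) (p * 1 ^ (p - 1)) 1 :=
    Real.hasDerivAt_rpow_const (Or.inl one_ne_zero)
  have h1 := hder.hasDerivWithinAt (s := Iio 1)
  rw [hasDerivWithinAt_iff_tendsto_slope' (by simp)] at h1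
  have h2 : ∀ᶠ y in nhdsWithin (1:ℝ) (Iio 1), q < slope (fun y : ℝ => y ^ p) 1 y :=
    h1.eventually (lt_mem_nhds (by simpa using hq))
  have h3 : ∀ᶠ y in nhdsWithin (1:ℝ) (Iio 1), (0:ℝ) < y :=
    mem_nhdsWithin_of_mem_nhds (lt_mem_nhds one_pos)
  obtain ⟨l, hl1, hl2, hl3⟩ := (h2.and (h3.and self_mem_nhdsWithin)).exists
  have hl4 : l < 1 := hl3
  have hsl : slope (fun y : ℝ => y ^ p) 1 l = (1 - l ^ p) / (1 - l) := by
    rw [slope_def_field, Real.one_rpow, ← neg_div_neg_eq]; congr 1 <;> ring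
  rw [hsl] at hl1
  have hlt : Tendsto (fun s : ℝ => l * s) atTop atTop := tendsto_id.const_mul_atTop hl2
  have h5 := hf_lim.comp hlt
  have h6 : Tendsto (fun s : ℝ => (s ^ (-p) * f s - l ^ p * ((l * s) ^ (-p) * f (l * s))) / (1 - l)
      - q * (s ^ (-p) * f s)) atTop (nhds ((1 - l ^ p * 1) / (1 - l) - q * 1)) :=
    ((hf_lim.sub (h5.const_mul _)).div_const _).sub (hf_lim.const_mul q)
  set k := ((1 - l ^ p) / (1 - l) - q) / 2 with hk
  have hk0 : 0 < k := by rw [hk]; linarith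
  have h7 := h6.eventually (lt_mem_nhds (show k < (1 - l ^ p * 1) / (1 - l) - q * 1 by
    rw [mul_one, mul_one]; linarith))
  obtain ⟨S, hS⟩ := (h7.and (eventually_ge_atTop 1)).exists_forall_of_atTop
  refine ⟨max S 1, le_max_right _ _, k, hk0, fun s hs => ?_⟩
  obtain ⟨h8, h9⟩ := hS s ((le_max_left _ _).trans hs)
  have hs0 : (0:ℝ) < s := by linarith
  have hP := Real.rpow_pos_of_pos hs0 p
  have hL := Real.rpow_pos_of_pos hl2 p
  have e1 : l ^ p * ((l * s) ^ (-p) * f (l * s)) = s ^ (-p) * f (l * s) := by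
    rw [Real.mul_rpow hl2.le hs0.le, Real.rpow_neg hl2.le]
    field_simp
  rw [e1] at h8
  have ht := convex_tangent hf hd (a := l * s) (b := s) (by positivity) hs0
  have h10 : (f s - f (l * s)) / (1 - l) ≤ s * deriv f s := by
    rw [div_le_iff₀ (by linarith)]; nlinarith
  have e2 : (s ^ (-p) * f s - s ^ (-p) * f (l * s)) / (1 - l) - q * (s ^ (-p) * f s)
      = (s ^ p)⁻¹ * ((f s - f (l * s)) / (1 - l) - q * f s) := by
    rw [Real.rpow_neg hs0.le]; ring
  rw [e2, lt_inv_mul_iff₀ hP] at h8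
  linarith


section
variable {n : ℕ} {R T : ℝ} {f : ℝ → ℝ} {V : EuclideanSpace ℝ (Fin n) → ℝ}
    {u : ℝ → EuclideanSpace ℝ (Fin n) → ℝ}

theorem lap_continuousAt {g : EuclideanSpace ℝ (Fin n) → ℝ} {x : EuclideanSpace ℝ (Fin n)}
    (hg : ContDiffAt ℝ 2 g x) : ContinuousAt (lap g) x := by
  unfold lap
  refine tendsto_finsetSum _ fun i _ => ?_
  have h2 : ContDiffAt ℝ 1 (fderiv ℝ g) x := hg.fderiv_right (by norm_num)
  have h3 : ContDiffAt ℝ 1 (fun y => fderiv ℝ g y (EuclideanSpace.single i 1)) x :=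
    h2.clm_apply contDiffAt_const
  have h4 : ContDiffAt ℝ 0 (fderiv ℝ (fun y => fderiv ℝ g y (EuclideanSpace.single i 1))) x :=
    h3.fderiv_right (by norm_num)
  exact (h4.continuousAt.clm_apply continuousAt_const)

theorem Sol.start (h : Sol n R T f V u) (hfc : ContinuousOn f (Ici 0))
    (hV : ContinuousOn V (ball 0 R)) {t₁ : ℝ} (ht₁ : t₁ ∈ Ioo 0 T)
    {x₁ : EuclideanSpace ℝ (Fin n)} (hx₁ : x₁ ∈ ball (0 : EuclideanSpace ℝ (Fin n)) R)
    (hpos : 0 < deriv (fun s => u s x₁) t₁) :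
    ∃ (y₁ : EuclideanSpace ℝ (Fin n)) (r₀ c h₀ : ℝ), 0 < r₀ ∧ 0 < c ∧ 0 < h₀ ∧ t₁ + h₀ < T ∧
      closedBall y₁ r₀ ⊆ ball 0 R ∧
      ∀ k, 0 < k → k < h₀ → ∀ x ∈ closedBall y₁ r₀, c * k ≤ u (t₁ + k) x - u t₁ x := by
  set d := deriv (fun s => u s x₁) t₁ with hd
  have hbn : ball (0 : EuclideanSpace ℝ (Fin n)) R ∈ nhds x₁ := isOpen_ball.mem_nhds hx₁
  have hcont : ContinuousAt (fun x => lap (fun y => u t₁ y) x + V x * f (u t₁ x)) x₁ := by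
    refine (lap_continuousAt (h.dx t₁ ht₁ x₁ hx₁)).add
      ((hV.continuousAt hbn).mul ?_)
    have h1 : ContinuousOn (fun x => f (u t₁ x)) (ball 0 R) := by
      refine hfc.comp (t := Ici 0) ?_ (fun x hx => h.nonneg t₁ ht₁ x hx)
      exact fun x hx => (h.dx t₁ ht₁ x hx).continuousAt.continuousWithinAt
    exact h1.continuousAt hbn
  have hev : ∀ᶠ x in nhds x₁, d / 2 < lap (fun y => u t₁ y) x + V x * f (u t₁ x) := by
    refine hcont.eventually (lt_mem_nhds ?_)
    have := h.eq t₁ ht₁ x₁ hx₁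
    simp only
    linarith
  obtain ⟨ρ, hρ, hball⟩ := Metric.eventually_nhds_iff_ball.1 (hev.and hbn)
  have hK : closedBall x₁ (ρ / 2) ⊆ ball x₁ ρ := closedBall_subset_ball (by linarith)
  have ht1 := ht₁.1
  have ht2 := ht₁.2
  set η := (T - t₁) / 2 with hη
  have hη0 : 0 < η := by rw [hη]; linarith
  let F : ℕ → Set (EuclideanSpace ℝ (Fin n)) := fun m => (ball x₁ (ρ / 2))ᶜ ∪
    ⋂ k ∈ Ioo 0 (η / ((m : ℝ) + 1)), {x ∈ closedBall x₁ (ρ / 2) | d / 4 * k ≤ u (t₁ + k) x - u t₁ x}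
  have hkT : ∀ m : ℕ, η / ((m : ℝ) + 1) ≤ η := fun m =>
    div_le_self hη0.le (by linarith [Nat.cast_nonneg (α := ℝ) m])
  have hFc : ∀ m, IsClosed (F m) := by
    intro m
    refine IsClosed.union isOpen_ball.isClosed_compl ?_
    refine isClosed_biInter fun k hk => ?_
    have hk2 : t₁ + k ∈ Ioo 0 T := ⟨by linarith [hk.1], by linarith [hk.2, hkT m]⟩
    have hc : ContinuousOn (fun x => u (t₁ + k) x - u t₁ x) (closedBall x₁ (ρ / 2)) := by
      intro x hx
      have hxR := (hball x (hK hx)).2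
      exact ((h.dx _ hk2 x hxR).continuousAt.sub (h.dx _ ht₁ x hxR).continuousAt).continuousWithinAt
    exact hc.preimage_isClosed_of_isClosed isClosed_closedBall isClosed_Ici
  have hFU : ⋃ m, F m = univ := by
    rw [eq_univ_iff_forall]
    intro x
    by_cases hx : x ∈ ball x₁ (ρ / 2)
    swap
    · exact mem_iUnion.2 ⟨0, Or.inl hx⟩
    have hxR := hball x (hK (ball_subset_closedBall hx))
    have hder := (h.dt t₁ ht₁ x hxR.2).hasDerivAt
    have hdx : d / 4 < deriv (fun s => u s x) t₁ := by
      rw [h.eq t₁ ht₁ x hxR.2]; linarith [hxR.1]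
    have h6 := hder.hasDerivWithinAt (s := Ioi t₁)
    rw [hasDerivWithinAt_iff_tendsto_slope' (by simp)] at h6
    have h7 := h6.eventually (lt_mem_nhds hdx)
    rw [eventually_nhdsWithin_iff, Metric.eventually_nhds_iff] at h7
    obtain ⟨ε, hε, h7⟩ := h7
    obtain ⟨m, hm⟩ := exists_nat_gt (η / ε)
    refine mem_iUnion.2 ⟨m, Or.inr ?_⟩
    refine mem_iInter₂.2 fun k hk => ⟨ball_subset_closedBall hx, ?_⟩
    have hk1 := hk.1
    have hkε : k < ε := by
      refine hk.2.trans ?_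
      rw [div_lt_iff₀ (by positivity)]
      rw [div_lt_iff₀ hε] at hm
      nlinarith
    have h8 := h7 (y := t₁ + k) (by rw [Real.dist_eq]; simp [abs_of_pos hk1, hkε]) (by simp [hk1])
    rw [slope_def_field, lt_div_iff₀ (by linarith)] at h8
    linarith
  have hdense := dense_iUnion_interior_of_closed hFc hFU
  obtain ⟨y₁, hy₁, hy₂⟩ := hdense.exists_mem_open isOpen_ball
    (nonempty_ball.2 (show 0 < ρ / 2 by linarith) : (ball x₁ (ρ / 2)).Nonempty)
  obtain ⟨m, hm⟩ := mem_iUnion.1 hy₁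
  have hnb : ball x₁ (ρ / 2) ∩ F m ∈ nhds y₁ :=
    inter_mem (isOpen_ball.mem_nhds hy₂) (mem_interior_iff_mem_nhds.1 hm)
  obtain ⟨r₀, hr₀, hsub⟩ := Metric.nhds_basis_closedBall.mem_iff.1 hnb
  refine ⟨y₁, r₀, d / 4, η / ((m : ℝ) + 1), hr₀, by linarith, by positivity, ?_, ?_, ?_⟩
  · linarith [hkT m]
  · intro x hx
    exact (hball x (hK (ball_subset_closedBall (hsub hx).1))).2
  · intro k hk1 hk2 x hx
    obtain ⟨hx1, hx2⟩ := hsub hx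
    rcases hx2 with hx2 | hx2
    · exact absurd hx1 hx2
    · exact ((mem_iInter₂.1 hx2) k ⟨hk1, hk2⟩).2

theorem norm_line (x : EuclideanSpace ℝ (Fin n)) (i : Fin n) (s : ℝ) :
    ‖x + s • (EuclideanSpace.single i 1 : EuclideanSpace ℝ (Fin n))‖ ^ 2
      = ‖x‖ ^ 2 + 2 * x i * s + s ^ 2 := by
  rw [norm_add_sq_real, inner_smul_right, norm_smul]
  simp [EuclideanSpace.inner_single_right]
  ring

theorem hasSecond_quad (A B C : ℝ) :
    HasSecond (fun s => A + B * s + C * s ^ 2) B (2 * C) := by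
  refine ⟨fun s => B + 2 * C * s, Eventually.of_forall fun s => ?_, by simp, ?_⟩
  · have h1 := ((hasDerivAt_id s).const_mul B).const_add A
    have h2 := (hasDerivAt_pow 2 s).const_mul C
    refine (h1.add h2).congr_deriv ?_
    simp; ring
  · have h1 := ((hasDerivAt_id (0:ℝ)).const_mul (2 * C)).const_add B
    exact h1.congr_deriv (by simp)

theorem norm_sq_sum (x : EuclideanSpace ℝ (Fin n)) : ∑ i, x i ^ 2 = ‖x‖ ^ 2 := by
  rw [EuclideanSpace.real_norm_sq_eq]

end


section
variable {n : ℕ} {R T : ℝ} {f : ℝ → ℝ} {V : EuclideanSpace ℝ (Fin n) → ℝ}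
    {u : ℝ → EuclideanSpace ℝ (Fin n) → ℝ}

theorem Sol.hasDerivAt_shift (h : Sol n R T f V u) {t k : ℝ} (ht : t + k ∈ Ioo 0 T)
    {x : EuclideanSpace ℝ (Fin n)} (hx : x ∈ ball (0 : EuclideanSpace ℝ (Fin n)) R) :
    HasDerivAt (fun s => u (s + k) x) (lap (fun y => u (t + k) y) x + V x * f (u (t + k) x)) t := by
  have h1 := (h.dt (t + k) ht x hx).hasDerivAt
  rw [h.eq _ ht x hx] at h1
  exact h1.comp_add_const t k

theorem Sol.hasDerivAt (h : Sol n R T f V u) {t : ℝ} (ht : t ∈ Ioo 0 T)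
    {x : EuclideanSpace ℝ (Fin n)} (hx : x ∈ ball (0 : EuclideanSpace ℝ (Fin n)) R) :
    HasDerivAt (fun s => u s x) (lap (fun y => u t y) x + V x * f (u t x)) t := by
  have h1 := (h.dt t ht x hx).hasDerivAt
  rwa [h.eq _ ht x hx] at h1

set_option maxHeartbeats 1000000 in
/-- Propagation of the lower bound on time increments by an explicit subsolution. -/
theorem Sol.propagate (h : Sol n R T f V u) {Vm L0 : ℝ} (hL0 : 0 ≤ L0)
    (hV0 : ∀ x ∈ ball (0 : EuclideanSpace ℝ (Fin n)) R, 0 ≤ V x)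
    (hVm : ∀ x ∈ ball (0 : EuclideanSpace ℝ (Fin n)) R, V x ≤ Vm)
    (hfL : ∀ a b : ℝ, 0 ≤ b → b ≤ a → -L0 * (a - b) ≤ f a - f b)
    {t₁ : ℝ} (ht₁ : t₁ ∈ Ioo 0 T) {y₁ cv : EuclideanSpace ℝ (Fin n)} {r₀ ra rm : ℝ}
    (hrm : 0 < rm) (hr₀ : 0 < r₀)
    (hr : ∀ t ∈ Ico t₁ T, rm ≤ r₀ + (t - t₁) * ra)
    (hrR : ∀ t ∈ Ico t₁ T, ‖y₁ + (t - t₁) • cv‖ + (r₀ + (t - t₁) * ra) < R) :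
    ∃ Λ : ℝ, 0 ≤ Λ ∧ ∀ k c : ℝ, 0 < k → 0 < c →
      (∀ x ∈ closedBall y₁ r₀, c * k ≤ u (t₁ + k) x - u t₁ x) →
      ∀ t x, t₁ ≤ t → t + k < T → ‖x - (y₁ + (t - t₁) • cv)‖ ≤ r₀ + (t - t₁) * ra →
        c * k / r₀ ^ 4 * Real.exp (-Λ * (t - t₁)) *
          ((r₀ + (t - t₁) * ra) ^ 2 - ‖x - (y₁ + (t - t₁) • cv)‖ ^ 2) ^ 2 ≤ u (t + k) x - u t x := by
  have hR : 0 < R := by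
    have h1 := hrR t₁ ⟨le_rfl, ht₁.2⟩
    have h2 := hr t₁ ⟨le_rfl, ht₁.2⟩
    have := norm_nonneg (y₁ + (t₁ - t₁) • cv)
    linarith
  have ht1 := ht₁.1
  have ht2 := ht₁.2
  have hVm0 : 0 ≤ Vm := by
    have h0 : (0 : EuclideanSpace ℝ (Fin n)) ∈ ball (0 : EuclideanSpace ℝ (Fin n)) R := by simp [hR]
    exact (hV0 0 h0).trans (hVm 0 h0)
  set L := Vm * L0 with hL
  have hLnn : 0 ≤ L := mul_nonneg hVm0 hL0
  set G := 2 * R * (|ra| + ‖cv‖) with hG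
  set Bq := 2 * G + 8 + 4 * (n:ℝ) with hBq
  set Λ := L + Bq ^ 2 / (16 * rm ^ 2) with hΛ
  refine ⟨Λ, by positivity, ?_⟩
  intro k c hk hc hstart t₃ x₃ ht₃ ht₃' hx₃
  set ε := c * k / r₀ ^ 4 with hε
  have hε0 : 0 < ε := by positivity
  -- the moving quantities
  let g : ℝ → EuclideanSpace ℝ (Fin n) → ℝ := fun t x =>
    (r₀ + (t - t₁) * ra) ^ 2 - ‖x - (y₁ + (t - t₁) • cv)‖ ^ 2
  have hgcont : Continuous (fun q : ℝ × EuclideanSpace ℝ (Fin n) => g q.1 q.2) := by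
    simp only [g]; fun_prop
  let S : Set (ℝ × EuclideanSpace ℝ (Fin n)) :=
    {q | q.1 ∈ Icc t₁ t₃ ∧ 0 ≤ g q.1 q.2}
  have hIco : ∀ t, t ∈ Icc t₁ t₃ → t ∈ Ico t₁ T := fun t ht => ⟨ht.1, by linarith [ht.2]⟩
  have hgr : ∀ t x, t ∈ Icc t₁ t₃ → 0 ≤ g t x →
      ‖x - (y₁ + (t - t₁) • cv)‖ ≤ r₀ + (t - t₁) * ra := by
    intro t x ht hg
    have h1 := hr t (hIco t ht)
    refine le_of_sq_le_sq ?_ (by linarith)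
    simp only [g] at hg; linarith
  have hSR : ∀ t x, t ∈ Icc t₁ t₃ → 0 ≤ g t x → x ∈ ball (0 : EuclideanSpace ℝ (Fin n)) R := by
    intro t x ht hg
    have h1 := hgr t x ht hg
    have h2 := hrR t (hIco t ht)
    rw [mem_ball_zero_iff]
    have h3 : ‖x‖ ≤ ‖x - (y₁ + (t - t₁) • cv)‖ + ‖y₁ + (t - t₁) • cv‖ := by
      simpa using norm_add_le (x - (y₁ + (t - t₁) • cv)) (y₁ + (t - t₁) • cv)
    linarith
  have hSc : IsCompact S := by
    refine IsCompact.of_isClosed_subset (isCompact_Icc.prod (isCompact_closedBall 0 R)) ?_ ?_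
      (s := Icc t₁ t₃ ×ˢ closedBall (0 : EuclideanSpace ℝ (Fin n)) R)
    · exact (isClosed_Icc.preimage continuous_fst).inter (isClosed_Ici.preimage hgcont)
    · rintro ⟨t, x⟩ ⟨h1, h2⟩
      exact ⟨h1, ball_subset_closedBall (hSR t x h1 h2)⟩
  have hTt : ∀ t, t ∈ Icc t₁ t₃ → t ∈ Ioo 0 T ∧ t + k ∈ Ioo 0 T := fun t ht =>
    ⟨⟨by linarith [ht.1], by linarith [ht.2]⟩, ⟨by linarith [ht.1], by linarith [ht.2]⟩⟩
  let J : ℝ → EuclideanSpace ℝ (Fin n) → ℝ := fun t x =>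
    (u (t + k) x - u t x) - ε * Real.exp (-Λ * (t - t₁)) * (g t x * g t x)
  have hz0 : ∀ t x, t ∈ Icc t₁ t₃ → 0 ≤ g t x → u t x ≤ u (t + k) x := fun t x ht hg =>
    h.monotoneOn (hSR t x ht hg) (hTt t ht).1 (hTt t ht).2 (by linarith)
  have key := min_principle S hSc J ?_ (-L) ?_ t₃ x₃ ⟨⟨ht₃, le_rfl⟩, ?_⟩
  · have : ∀ a : ℝ, a ^ 2 = a * a := fun a => by ring
    rw [this (_ - _)]
    simp only [J, g] at key
    linarith
  · rintro ⟨t, x⟩ ⟨h1, h2⟩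
    simp only at h1 h2
    have hxR := hSR t x h1 h2
    have c1 := h.continuousAt (hTt t h1).1 hxR
    have c2 := h.continuousAt (hTt t h1).2 hxR
    have c3 : ContinuousAt (fun q : ℝ × EuclideanSpace ℝ (Fin n) => u (q.1 + k) q.2) (t, x) := by
      have hmap : ContinuousAt (fun q : ℝ × EuclideanSpace ℝ (Fin n) => (q.1 + k, q.2)) (t, x) := by
        fun_prop
      exact ContinuousAt.comp (f := fun q : ℝ × EuclideanSpace ℝ (Fin n) => (q.1 + k, q.2))
        (g := fun q : ℝ × EuclideanSpace ℝ (Fin n) => u q.1 q.2) c2 hmap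
    have c4 : Continuous (fun q : ℝ × EuclideanSpace ℝ (Fin n) =>
        ε * Real.exp (-Λ * (q.1 - t₁)) * (g q.1 q.2 * g q.1 q.2)) := by
      refine Continuous.mul (by fun_prop) (hgcont.mul hgcont)
    exact ((c3.sub c1).sub c4.continuousAt).continuousWithinAt
  · rintro t x ⟨h1, h2⟩ hneg
    simp only at h1 h2
    have hxR := hSR t x h1 h2
    have hz := hz0 t x h1 h2
    set P := ε * Real.exp (-Λ * (t - t₁)) with hP
    have hP0 : 0 < P := by positivity
    have hgpos : 0 < g t x := by
      rcases h2.eq_or_lt with h3 | h3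
      · exfalso
        simp only [J, ← h3] at hneg
        linarith
      · exact h3
    have htgt : t₁ < t := by
      rcases h1.1.eq_or_lt with h3 | h3
      · exfalso
        have hgx := hgr t x h1 h2
        subst h3
        simp only [sub_self, zero_smul, add_zero, zero_mul] at hgx
        have h4 := hstart x (by rw [mem_closedBall, dist_eq_norm]; exact hgx)
        have h5 : g t₁ x ≤ r₀ ^ 2 := by
          simp only [g, sub_self, zero_mul, add_zero]; nlinarith [sq_nonneg ‖x - (y₁ + (0:ℝ) • cv)‖]
        have h6 : g t₁ x * g t₁ x ≤ r₀ ^ 4 := by nlinarith [sq_nonneg r₀]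
        have h7 : ε * (g t₁ x * g t₁ x) ≤ c * k := by
          calc ε * (g t₁ x * g t₁ x) ≤ ε * r₀ ^ 4 := by gcongr
            _ = c * k := by rw [hε]; field_simp
        simp only [J, sub_self, mul_zero, Real.exp_zero, mul_one] at hneg
        linarith
      · exact h3
    have hgn : ∀ᶠ q : ℝ × EuclideanSpace ℝ (Fin n) in nhds (t, x), 0 < g q.1 q.2 :=
      hgcont.continuousAt.eventually (lt_mem_nhds hgpos)
    refine ⟨?_, ?_, ?_⟩
    · have hl : Tendsto (fun s : ℝ => (s, x)) (nhds t) (nhds (t, x)) := by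
        have : Continuous (fun s : ℝ => (s, x)) := by fun_prop
        exact this.tendsto t
      have h3 := hl.eventually hgn
      filter_upwards [mem_nhdsWithin_of_mem_nhds h3, Ioo_mem_nhdsLT htgt] with s hs1 hs2
      exact ⟨⟨hs2.1.le, hs2.2.le.trans h1.2⟩, le_of_lt hs1⟩
    · have hl : Tendsto (fun y => (t, y)) (nhds x) (nhds (t, x)) := by
        have : Continuous (fun y : EuclideanSpace ℝ (Fin n) => (t, y)) := by fun_prop
        exact this.tendsto x
      filter_upwards [hl.eventually hgn] with y hy
      exact ⟨h1, le_of_lt hy⟩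
    set ξ := x - (y₁ + (t - t₁) • cv) with hξ
    set r := r₀ + (t - t₁) * ra with hrdef
    set gt := 2 * r * ra + 2 * inner ℝ ξ cv with hgt
    have hgder : HasDerivAt (fun s => g s x) gt t := by
      have a1 : HasDerivAt (fun s : ℝ => r₀ + (s - t₁) * ra) ra t := by
        have := (((hasDerivAt_id t).sub_const t₁).mul_const ra).const_add r₀
        simpa using this
      have a2 : HasDerivAt (fun s : ℝ => x - (y₁ + (s - t₁) • cv)) (-cv) t := by
        have := ((((hasDerivAt_id t).sub_const t₁).smul_const cv).const_add y₁).const_sub x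
        simpa using this
      have a3 := (a1.pow 2).sub a2.norm_sq
      refine HasDerivAt.congr_deriv a3 ?_
      simp only [hgt, inner_neg_right, hξ, hrdef]
      push_cast
      ring
    have hexp : HasDerivAt (fun s => ε * Real.exp (-Λ * (s - t₁))) (P * (-Λ)) t := by
      have a1 : HasDerivAt (fun s : ℝ => -Λ * (s - t₁)) (-Λ) t := by
        simpa using ((hasDerivAt_id t).sub_const t₁).const_mul (-Λ)
      exact (a1.exp.const_mul ε).congr_deriv (by rw [hP]; ring)
    have hJt := ((h.hasDerivAt_shift (hTt t h1).2 hxR).sub (h.hasDerivAt (hTt t h1).1 hxR)).sub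
      (hexp.mul (hgder.mul hgder))
    have hline : ∀ i, HasSecond (fun s : ℝ => g t (x + s • EuclideanSpace.single i 1))
        (-2 * ξ i) (2 * (-1)) := by
      intro i
      have := hasSecond_quad (g t x) (-2 * ξ i) (-1)
      convert this using 2 with s
      simp only [g]
      rw [show x + s • EuclideanSpace.single i 1 - (y₁ + (t - t₁) • cv)
        = ξ + s • EuclideanSpace.single i 1 by rw [hξ]; abel, norm_line]
      ring
    have hD := fun i => ((hasSecond_of_contDiffAt (h.dx _ (hTt t h1).2 x hxR) i).sub
      (hasSecond_of_contDiffAt (h.dx _ (hTt t h1).1 x hxR) i)).sub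
      (((hline i).mul (hline i)).const_mul P)
    refine ⟨_, _, _, hJt, hD, ?_⟩
    simp only [zero_smul, add_zero, J, Pi.mul_apply]
    have hsum : ∑ i, P * (2 * -1 * g t x + 2 * (-2 * ξ i) * (-2 * ξ i) + g t x * (2 * -1))
        = P * (-4 * n * g t x + 8 * ‖ξ‖ ^ 2) := by
      rw [← Finset.mul_sum, ← norm_sq_sum]
      congr 1
      rw [Finset.mul_sum, Finset.sum_congr rfl
        (fun i _ => show 2 * -1 * g t x + 2 * (-2 * ξ i) * (-2 * ξ i) + g t x * (2 * -1)
          = -4 * g t x + 8 * ξ i ^ 2 by ring), Finset.sum_add_distrib]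
      simp
      ring
    rw [Finset.sum_sub_distrib, Finset.sum_sub_distrib, hsum]
    change _ < _ - (lap (fun y => u (t + k) y) x - lap (fun y => u t y) x - _)
    have hξr : ‖ξ‖ ^ 2 = r ^ 2 - g t x := by simp only [g]; ring
    have hrx : rm ≤ r := hr t (hIco t h1)
    have hrR' : r ≤ R := by
      have := hrR t (hIco t h1)
      have h9 := norm_nonneg (y₁ + (t - t₁) • cv)
      linarith
    have hgtG : gt ≤ G := by
      have b1 : inner ℝ ξ cv ≤ ‖ξ‖ * ‖cv‖ := real_inner_le_norm ξ cv
      have b2 : ‖ξ‖ ≤ R := (hgr t x h1 h2).trans hrR'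
      have b3 : ‖ξ‖ * ‖cv‖ ≤ R * ‖cv‖ := by gcongr
      have b4 : r * ra ≤ R * |ra| := by
        calc r * ra ≤ r * |ra| := by
              apply mul_le_mul_of_nonneg_left (le_abs_self _); linarith
          _ ≤ R * |ra| := by gcongr
      have b5 : G = 2 * (R * |ra|) + 2 * (R * ‖cv‖) := by rw [hG]; ring
      have b6 : gt = 2 * (r * ra) + 2 * inner ℝ ξ cv := by rw [hgt]; ring
      linarith
    have hreact : -L * (u (t + k) x - u t x) ≤ V x * f (u (t + k) x) - V x * f (u t x) := by
      have b1 := hfL _ _ (h.nonneg t (hTt t h1).1 x hxR) hz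
      have b2 := mul_le_mul_of_nonneg_left b1 (hV0 x hxR)
      have b3 : V x * (L0 * (u (t + k) x - u t x)) ≤ Vm * (L0 * (u (t + k) x - u t x)) :=
        mul_le_mul_of_nonneg_right (hVm x hxR) (mul_nonneg hL0 (by linarith))
      have b4 : V x * (-L0 * (u (t + k) x - u t x)) = -(V x * (L0 * (u (t + k) x - u t x))) := by ring
      have b5 : -L * (u (t + k) x - u t x) = -(Vm * (L0 * (u (t + k) x - u t x))) := by rw [hL]; ring
      have b6 := mul_sub (V x) (f (u (t + k) x)) (f (u t x))
      linarith
    set y := g t x with hy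
    have hquad : 0 < (Λ - L) * y ^ 2 - 2 * y * gt + 8 * r ^ 2 - 8 * y - 4 * n * y := by
      have b1 : (Λ - L) * y ^ 2 - Bq * y + 8 * rm ^ 2 > 0 := by
        have : (Λ - L) * y ^ 2 - Bq * y + 8 * rm ^ 2
            = (Bq * y / (4 * rm) - 2 * rm) ^ 2 + 4 * rm ^ 2 := by
          rw [hΛ]; field_simp; ring
        rw [this]; positivity
      have b2 : rm ^ 2 ≤ r ^ 2 := by gcongr
      have b3 : y * gt ≤ y * G := mul_le_mul_of_nonneg_left hgtG hgpos.le
      have b4 : Bq * y = 2 * (y * G) + 8 * y + 4 * n * y := by rw [hBq]; ring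
      have b5 : 2 * y * gt = 2 * (y * gt) := by ring
      linarith
    have hfin := mul_pos hP0 hquad
    rw [hξr]
    have e1 : P * ((Λ - L) * y ^ 2 - 2 * y * gt + 8 * r ^ 2 - 8 * y - 4 * n * y)
      = -(P * (-Λ) * (y * y) + P * (gt * y + y * gt)) + P * (-4 * n * y + 8 * (r ^ 2 - y))
        - L * (P * (y * y)) := by ring
    have e2 : -L * (u (t + k) x - u t x - P * (y * y))
      = -L * (u (t + k) x - u t x) + L * (P * (y * y)) := by ring
    linarith
  · simp only [g]
    have h0 := norm_nonneg (x₃ - (y₁ + (t₃ - t₁) • cv))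
    have : ‖x₃ - (y₁ + (t₃ - t₁) • cv)‖ ^ 2 ≤ (r₀ + (t₃ - t₁) * ra) ^ 2 := by gcongr
    linarith

end


section
variable {n : ℕ} {R T : ℝ} {f : ℝ → ℝ} {V : EuclideanSpace ℝ (Fin n) → ℝ}
    {u : ℝ → EuclideanSpace ℝ (Fin n) → ℝ}

/-- Uniform lower bound on time increments near the final time. -/
theorem Sol.lower (h : Sol n R T f V u) {Vm L0 : ℝ} (hL0 : 0 ≤ L0)
    (hV0 : ∀ x ∈ ball (0 : EuclideanSpace ℝ (Fin n)) R, 0 ≤ V x)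
    (hVm : ∀ x ∈ ball (0 : EuclideanSpace ℝ (Fin n)) R, V x ≤ Vm)
    (hfL : ∀ a b : ℝ, 0 ≤ b → b ≤ a → -L0 * (a - b) ≤ f a - f b)
    {t₁ : ℝ} (ht₁ : t₁ ∈ Ioo 0 T) {y₁ : EuclideanSpace ℝ (Fin n)} {r₀ c h₀ r₁ : ℝ}
    (hr₀ : 0 < r₀) (hc : 0 < c)
    (hsub : closedBall y₁ r₀ ⊆ ball 0 R)
    (hstart : ∀ k, 0 < k → k < h₀ → ∀ x ∈ closedBall y₁ r₀, c * k ≤ u (t₁ + k) x - u t₁ x)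
    (hr₁ : 0 < r₁) (hr₁R : r₁ < R) (hyR : ‖y₁‖ + r₀ < R) :
    ∃ t₀ ∈ Ioo t₁ T, ∃ c' > 0, ∀ k, 0 < k → k < h₀ → ∀ t, t₀ ≤ t → t + k < T →
      ∀ x, ‖x‖ ≤ r₁ → c' * k ≤ u (t + k) x - u t x := by
  obtain ⟨ht1, ht2⟩ := ht₁
  set τ := T - t₁ with hτ
  have hτ0 : 0 < τ := by linarith
  set R' := (r₁ + R) / 2 with hR'
  have hR'0 : 0 < R' := by linarith
  have hconv : ∀ t, r₀ + (t - t₁) * ((R' - r₀) / τ) = (1 - (t - t₁) / τ) * r₀ + (t - t₁) / τ * R' := by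
    intro t; field_simp; ring
  have hvec : ∀ t, y₁ + (t - t₁) • (-(1 / τ) • y₁) = (1 - (t - t₁) / τ) • y₁ := by
    intro t; rw [smul_smul, sub_smul, one_smul,
      show (t - t₁) * -(1 / τ) = -((t - t₁) / τ) by ring, neg_smul, ← sub_eq_add_neg]
  have hθ : ∀ t ∈ Ico t₁ T, 0 ≤ (t - t₁) / τ ∧ (t - t₁) / τ < 1 := by
    intro t ht
    refine ⟨div_nonneg (by linarith [ht.1]) hτ0.le, (div_lt_one hτ0).2 (by linarith [ht.2])⟩
  have hnv : ∀ t ∈ Ico t₁ T, ‖y₁ + (t - t₁) • (-(1 / τ) • y₁)‖ = (1 - (t - t₁) / τ) * ‖y₁‖ := by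
    intro t ht
    rw [hvec, norm_smul, Real.norm_of_nonneg (by linarith [(hθ t ht).2])]
  obtain ⟨Λ, hΛ, hprop⟩ := h.propagate (t₁ := t₁) (y₁ := y₁) (cv := -(1 / τ) • y₁) (r₀ := r₀)
    (ra := (R' - r₀) / τ) (rm := min r₀ R') hL0 hV0 hVm hfL ⟨ht1, ht2⟩ (lt_min hr₀ hR'0) hr₀
    (by
      intro t ht
      obtain ⟨a, b⟩ := hθ t ht
      rw [hconv]
      have e1 := mul_le_mul_of_nonneg_left (min_le_left r₀ R') (by linarith : 0 ≤ 1 - (t - t₁) / τ)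
      have e2 := mul_le_mul_of_nonneg_left (min_le_right r₀ R') a
      linarith)
    (by
      intro t ht
      obtain ⟨a, b⟩ := hθ t ht
      rw [hconv, hnv t ht]
      have e1 := mul_lt_mul_of_pos_left hyR (by linarith : 0 < 1 - (t - t₁) / τ)
      have e2 := mul_le_mul_of_nonneg_left (by linarith : R' ≤ R) a
      linarith)
  set dd := R' - r₁ with hdd
  have hdd0 : 0 < dd := by rw [hdd, hR']; linarith
  -- closeness to the final time
  have hev : ∀ᶠ t in nhdsWithin T (Iio T),
      r₁ + dd / 2 < (r₀ + (t - t₁) * ((R' - r₀) / τ)) - (1 - (t - t₁) / τ) * ‖y₁‖ := by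
    refine Tendsto.eventually_const_lt (u := r₁ + dd / 2) (v := R') (by rw [hdd]; linarith) ?_
    have hcont : Continuous (fun t : ℝ => (r₀ + (t - t₁) * ((R' - r₀) / τ)) - (1 - (t - t₁) / τ) * ‖y₁‖) := by
      fun_prop
    have := (hcont.tendsto T).mono_left (nhdsWithin_le_nhds (s := Iio T))
    convert this using 2
    rw [← hτ, div_self hτ0.ne']; field_simp; ring
  obtain ⟨t₀', ht₀', hmem⟩ := (mem_nhdsLT_iff_exists_Ioo_subset' ht2).1 hev
  set t₀ := (max t₀' t₁ + T) / 2 with ht₀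
  have hm : max t₀' t₁ < T := max_lt ht₀' ht2
  have hm1 := le_max_left t₀' t₁
  have hm2 := le_max_right t₀' t₁
  refine ⟨t₀, ⟨by rw [ht₀]; linarith, by rw [ht₀]; linarith⟩,
    c / r₀ ^ 4 * Real.exp (-Λ * τ) * ((dd / 2) ^ 2) ^ 2, by positivity, ?_⟩
  intro k hk hkh t ht htk x hx
  have htI : t ∈ Ioo t₀' T := ⟨by linarith, by linarith⟩
  have htI' : t ∈ Ico t₁ T := ⟨by linarith, by linarith⟩
  have h1 : r₁ + dd / 2 < (r₀ + (t - t₁) * ((R' - r₀) / τ)) - (1 - (t - t₁) / τ) * ‖y₁‖ := hmem htI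
  have h2 : ‖x - (y₁ + (t - t₁) • (-(1 / τ) • y₁))‖ ≤ r₁ + (1 - (t - t₁) / τ) * ‖y₁‖ := by
    rw [← hnv t htI']; exact (norm_sub_le _ _).trans (by linarith)
  have h3 := hprop k c hk hc (hstart k hk hkh) t x htI'.1 htk (by linarith)
  refine le_trans ?_ h3
  set r := r₀ + (t - t₁) * ((R' - r₀) / τ) with hr
  set N := ‖x - (y₁ + (t - t₁) • (-(1 / τ) • y₁))‖ with hN
  have hN0 : 0 ≤ N := norm_nonneg _
  have h4 : (dd / 2) ^ 2 ≤ r ^ 2 - N ^ 2 := by nlinarith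
  have h5 : Real.exp (-Λ * τ) ≤ Real.exp (-Λ * (t - t₁)) := by
    apply Real.exp_le_exp.2
    have := mul_le_mul_of_nonneg_left (by linarith : t - t₁ ≤ τ) hΛ
    linarith
  calc c / r₀ ^ 4 * Real.exp (-Λ * τ) * ((dd / 2) ^ 2) ^ 2 * k
      = c * k / r₀ ^ 4 * Real.exp (-Λ * τ) * ((dd / 2) ^ 2) ^ 2 := by ring
    _ ≤ c * k / r₀ ^ 4 * Real.exp (-Λ * (t - t₁)) * (r ^ 2 - N ^ 2) ^ 2 := by gcongr

theorem norm_add_lt_of_closedBall_subset {y : EuclideanSpace ℝ (Fin n)} {r : ℝ} (hn : 1 ≤ n)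
    (hr : 0 < r) (hsub : closedBall y r ⊆ ball 0 R) : ‖y‖ + r < R := by
  have : ∃ e : EuclideanSpace ℝ (Fin n), ‖e‖ = 1 ∧ y = ‖y‖ • e := by
    by_cases hy : y = 0
    · refine ⟨EuclideanSpace.single ⟨0, hn⟩ 1, by simp, by simp [hy]⟩
    · have : ‖y‖ ≠ 0 := norm_ne_zero_iff.2 hy
      refine ⟨‖y‖⁻¹ • y, ?_, ?_⟩
      · rw [norm_smul, norm_inv, norm_norm, inv_mul_cancel₀ this]
      · rw [smul_smul, mul_inv_cancel₀ this, one_smul]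
  obtain ⟨e, he, hye⟩ := this
  have h1 : (‖y‖ + r) • e ∈ closedBall y r := by
    rw [mem_closedBall, dist_eq_norm, add_smul, ← hye, add_sub_cancel_left, norm_smul, he,
      Real.norm_of_nonneg hr.le, mul_one]
  have h2 := hsub h1
  rwa [mem_ball_zero_iff, norm_smul, he, mul_one, Real.norm_of_nonneg (by positivity)] at h2

end


section
variable {n : ℕ} {R T : ℝ} {f : ℝ → ℝ} {V : EuclideanSpace ℝ (Fin n) → ℝ}
    {u : ℝ → EuclideanSpace ℝ (Fin n) → ℝ}

theorem bump_data (n : ℕ) {rIn r₁ : ℝ} (h0 : 0 < rIn) (h1 : rIn < r₁) :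
    ∃ (χ : EuclideanSpace ℝ (Fin n) → ℝ) (d1 d2 : Fin n → EuclideanSpace ℝ (Fin n) → ℝ) (M : ℝ),
      0 ≤ M ∧ Continuous χ ∧ (∀ x, 0 ≤ χ x) ∧ (∀ x, χ x ≤ 1) ∧ (∀ x, ‖x‖ ≤ rIn → χ x = 1) ∧
      (∀ x, r₁ ≤ ‖x‖ → χ x = 0) ∧
      (∀ i x, HasSecond (fun s : ℝ => χ (x + s • EuclideanSpace.single i 1)) (d1 i x) (d2 i x)) ∧
      (∀ i x, ‖x‖ ≤ r₁ → |d1 i x| ≤ M ∧ |d2 i x| ≤ M) ∧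
      (∀ i x, ‖x‖ < rIn → d1 i x = 0 ∧ d2 i x = 0) := by
  let b : ContDiffBump (0 : EuclideanSpace ℝ (Fin n)) := ⟨rIn, r₁, h0, h1⟩
  have hb : ContDiff ℝ 2 b := b.contDiff
  have hb1 : ∀ i : Fin n, ContDiff ℝ 1 (fun y => fderiv ℝ b y (EuclideanSpace.single i 1)) := by
    intro i
    exact (hb.fderiv_right (m := 1) (by norm_num)).clm_apply contDiff_const
  have hb2 : ∀ i : Fin n, Continuous (fun x => fderiv ℝ (fun y => fderiv ℝ b y (EuclideanSpace.single i 1)) x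
    (EuclideanSpace.single i 1)) := by
    intro i
    exact ((hb1 i).continuous_fderiv (by norm_num)).clm_apply continuous_const
  have hbd : ∀ g : EuclideanSpace ℝ (Fin n) → ℝ, Continuous g →
      ∃ C, ∀ x ∈ closedBall (0 : EuclideanSpace ℝ (Fin n)) r₁, ‖g x‖ ≤ C := fun g hg =>
    (isCompact_closedBall 0 r₁).exists_bound_of_continuousOn hg.continuousOn
  choose C1 hC1 using fun i : Fin n => hbd _ (hb1 i).continuous
  choose C2 hC2 using fun i : Fin n => hbd _ (hb2 i)
  refine ⟨b, fun i y => fderiv ℝ b y (EuclideanSpace.single i 1),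
    fun i x => fderiv ℝ (fun y => fderiv ℝ b y (EuclideanSpace.single i 1)) x
    (EuclideanSpace.single i 1), ∑ i, (|C1 i| + |C2 i|), by positivity, b.continuous,
    fun x => b.nonneg, fun x => b.le_one, ?_, ?_, ?_, ?_, ?_⟩
  · intro x hx
    exact b.one_of_mem_closedBall (by simpa using hx)
  · intro x hx
    exact b.zero_of_le_dist (by simpa using hx)
  · intro i x
    exact hasSecond_of_contDiffAt hb.contDiffAt i
  · intro i x hx
    have h3 : |C1 i| + |C2 i| ≤ ∑ i, (|C1 i| + |C2 i|) :=
      Finset.single_le_sum (f := fun i => |C1 i| + |C2 i|) (fun i _ => by positivity) (Finset.mem_univ i)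
    have h4 := hC1 i x (by simpa using hx)
    have h5 := hC2 i x (by simpa using hx)
    rw [Real.norm_eq_abs] at h4 h5
    have := le_abs_self (C1 i)
    have := le_abs_self (C2 i)
    have := abs_nonneg (C1 i)
    have := abs_nonneg (C2 i)
    exact ⟨by linarith, by linarith⟩
  · intro i x hx
    have hz : ∀ y : EuclideanSpace ℝ (Fin n), ‖y‖ < rIn → fderiv ℝ b y (EuclideanSpace.single i 1) = 0 := by
      intro y hy
      have he : (b : EuclideanSpace ℝ (Fin n) → ℝ) =ᶠ[nhds y] fun _ => (1:ℝ) := by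
        filter_upwards [isOpen_ball.mem_nhds (show y ∈ ball (0 : EuclideanSpace ℝ (Fin n)) rIn by simpa using hy)] with z hz
        exact b.one_of_mem_closedBall (ball_subset_closedBall hz)
      rw [he.fderiv_eq]; simp
    refine ⟨hz x hx, ?_⟩
    have he : (fun y => fderiv ℝ b y (EuclideanSpace.single i 1)) =ᶠ[nhds x] fun _ => (0:ℝ) := by
      filter_upwards [isOpen_ball.mem_nhds (show x ∈ ball (0 : EuclideanSpace ℝ (Fin n)) rIn by simpa using hx)] with z hz'
      exact hz z (by simpa using hz')
    beta_reduce
    rw [he.fderiv_eq]; simp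

/-- Lower bound for the second derivative of `χ^k u^q`. -/
theorem bracket_lower {k q M X U α β v w : ℝ} (hk : 0 < k) (hq : 1 < q) (hX : 0 < X) (hX1 : X ≤ 1)
    (hU : 0 < U) (hα : |α| ≤ M) (hβ : |β| ≤ M) :
    X ^ k * (q * U ^ (q - 1) * w)
      - (|k * (k - 1)| * M ^ 2 + k * M + k ^ 2 * q / (q - 1) * M ^ 2) * X ^ (k - 2) * U ^ q ≤
    (k * (k - 1) * X ^ (k - 2) * α ^ 2 + k * X ^ (k - 1) * β) * U ^ q +
      2 * (k * X ^ (k - 1) * α) * (q * U ^ (q - 1) * v) +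
      X ^ k * (q * (q - 1) * U ^ (q - 2) * v ^ 2 + q * U ^ (q - 1) * w) := by
  have e1 : X ^ (k - 1) = X ^ (k - 2) * X := by
    rw [← Real.rpow_add_one hX.ne']; congr 1; ring
  have e2 : X ^ k = X ^ (k - 2) * X ^ 2 := by
    rw [← Real.rpow_add_natCast hX.ne']; congr 1; push_cast; ring
  have e3 : U ^ (q - 1) = U ^ (q - 2) * U := by
    rw [← Real.rpow_add_one hU.ne']; congr 1; ring
  have e4 : U ^ q = U ^ (q - 2) * U ^ 2 := by
    rw [← Real.rpow_add_natCast hU.ne']; congr 1; push_cast; ring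
  set A := X ^ (k - 2) with hA
  set B := U ^ (q - 2) with hB
  have hA0 : 0 < A := Real.rpow_pos_of_pos hX _
  have hB0 : 0 < B := Real.rpow_pos_of_pos hU _
  have hq1 : 0 < q - 1 := by linarith
  have hM : 0 ≤ M := (abs_nonneg α).trans hα
  have ha2 : α ^ 2 ≤ M ^ 2 := sq_le_sq' (by linarith [neg_abs_le α]) ((le_abs_self α).trans hα)
  have s1 : -(|k * (k - 1)| * M ^ 2) ≤ k * (k - 1) * α ^ 2 := by
    have h1 : -|k * (k - 1)| * α ^ 2 ≤ k * (k - 1) * α ^ 2 :=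
      mul_le_mul_of_nonneg_right (neg_abs_le _) (sq_nonneg _)
    have h2 : |k * (k - 1)| * α ^ 2 ≤ |k * (k - 1)| * M ^ 2 :=
      mul_le_mul_of_nonneg_left ha2 (abs_nonneg _)
    linarith
  have s2 : -(k * M) ≤ k * (X * β) := by
    have h1 : |X * β| ≤ M := by
      rw [abs_mul, abs_of_pos hX]
      calc X * |β| ≤ 1 * M := by gcongr
        _ = M := one_mul M
    have h2 := neg_abs_le (X * β)
    have := mul_le_mul_of_nonneg_left (show -M ≤ X * β by linarith) hk.le
    linarith
  have s3 : -(k ^ 2 * q / (q - 1) * M ^ 2) * U ^ 2 ≤ 2 * k * q * (X * α * U * v) + q * (q - 1) * (X * v) ^ 2 := by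
    have h1 : 2 * k * q * (X * α * U * v) + q * (q - 1) * (X * v) ^ 2
      = q * (q - 1) * (X * v + k / (q - 1) * (α * U)) ^ 2 - k ^ 2 * q / (q - 1) * α ^ 2 * U ^ 2 := by
      field_simp; ring
    have h2 : k ^ 2 * q / (q - 1) * α ^ 2 * U ^ 2 ≤ k ^ 2 * q / (q - 1) * M ^ 2 * U ^ 2 := by gcongr
    have h3 : 0 ≤ q * (q - 1) * (X * v + k / (q - 1) * (α * U)) ^ 2 := by positivity
    linarith
  rw [e1, e2, e3, e4]
  have s4 := mul_le_mul_of_nonneg_right (add_le_add s1 s2) (sq_nonneg U)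
  have s5 := mul_le_mul_of_nonneg_left (add_le_add s4 s3) (mul_pos hA0 hB0).le
  have g1 : A * B * ((-(|k * (k - 1)| * M ^ 2) + -(k * M)) * U ^ 2 + -(k ^ 2 * q / (q - 1) * M ^ 2) * U ^ 2)
    = - ((|k * (k - 1)| * M ^ 2 + k * M + k ^ 2 * q / (q - 1) * M ^ 2) * A * (B * U ^ 2)) := by ring
  have g2 : A * B * ((k * (k - 1) * α ^ 2 + k * (X * β)) * U ^ 2 + (2 * k * q * (X * α * U * v) + q * (q - 1) * (X * v) ^ 2))
    = (k * (k - 1) * A * α ^ 2 + k * (A * X) * β) * (B * U ^ 2) +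
      2 * (k * (A * X) * α) * (q * (B * U) * v) +
      A * X ^ 2 * (q * (q - 1) * B * v ^ 2) := by ring
  have g3 : A * X ^ 2 * (q * (q - 1) * B * v ^ 2 + q * (B * U) * w)
    = A * X ^ 2 * (q * (q - 1) * B * v ^ 2) + A * X ^ 2 * (q * (B * U) * w) := by ring
  linarith

end


section
variable {n : ℕ} {R T : ℝ} {f : ℝ → ℝ} {V : EuclideanSpace ℝ (Fin n) → ℝ}
    {u : ℝ → EuclideanSpace ℝ (Fin n) → ℝ}

theorem sup_alg {k q p X U l lh W fu fh df Z hi δ k2 N C L Bs : ℝ} (hX : 0 < X) (hU : 0 < U)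
    (hW : 0 ≤ W) (hhi : 0 < hi) (hδ : 0 < δ)
    (hB : X ^ k * (q * U ^ (q - 1) * l) - N * (C * X ^ (k - 2) * U ^ q) ≤ Bs)
    (htan : df * Z ≤ fh - fu) (hsup : k2 * U ^ p ≤ U * df - q * fu)
    (habs : N * C ≤ W * k2 * (X ^ 2 * U ^ (p - 1))) (hL : W * df < L)
    (hJ : hi * Z - δ * (X ^ k * U ^ q) < 0) :
    L * (hi * Z - δ * (X ^ k * U ^ q)) <
      hi * ((lh + W * fh) - (l + W * fu)) - δ * (X ^ k * ((l + W * fu) * q * U ^ (q - 1))) -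
        (hi * (lh - l) - δ * Bs) := by
  have e2 : X ^ k = X ^ (k - 2) * X ^ 2 := by
    rw [← Real.rpow_add_natCast hX.ne']; congr 1; push_cast; ring
  have e4 : U ^ q = U ^ (q - 1) * U := by
    rw [← Real.rpow_add_one hU.ne']; congr 1; ring
  have e5 : U ^ p = U ^ (p - 1) * U := by
    rw [← Real.rpow_add_one hU.ne']; congr 1; ring
  have hA0 : 0 < X ^ (k - 2) := Real.rpow_pos_of_pos hX _
  have hE0 : 0 < U ^ (q - 1) := Real.rpow_pos_of_pos hU _
  have hP0 : 0 < U ^ (p - 1) := Real.rpow_pos_of_pos hU _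
  have s0 := mul_lt_mul_of_neg_right hL hJ
  rw [e2, e4] at hB s0 ⊢
  rw [e5] at hsup
  set A := X ^ (k - 2)
  set E := U ^ (q - 1)
  set P := U ^ (p - 1)
  have s1 := mul_le_mul_of_nonneg_left htan (mul_nonneg hhi.le hW)
  have s2 := mul_le_mul_of_nonneg_left hsup (by positivity : 0 ≤ δ * W * (A * X ^ 2) * E)
  have s3 := mul_le_mul_of_nonneg_left habs (by positivity : 0 ≤ δ * A * E * U)
  have s4 := mul_le_mul_of_nonneg_left hB hδ.le
  have g1 : δ * W * (A * X ^ 2) * E * (k2 * (P * U)) = δ * A * E * U * (W * k2 * (X ^ 2 * P)) := by ring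
  have g2 : δ * (A * X ^ 2 * (q * E * l) - N * (C * A * (E * U)))
    = δ * (A * X ^ 2 * (q * E * l)) - δ * A * E * U * (N * C) := by ring
  have g3 : W * df * (hi * Z - δ * (A * X ^ 2 * (E * U)))
    = hi * W * (df * Z) - δ * W * (A * X ^ 2) * E * (U * df - q * fu) -
      δ * W * (A * X ^ 2) * E * (q * fu) := by ring
  have g4 : hi * ((lh + W * fh) - (l + W * fu)) - δ * (A * X ^ 2 * ((l + W * fu) * q * E)) -
        (hi * (lh - l) - δ * Bs) = hi * W * (fh - fu) - δ * (A * X ^ 2 * (q * E * l))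
        - δ * W * (A * X ^ 2) * E * (q * fu) + δ * Bs := by ring
  linarith

set_option maxHeartbeats 1000000 in
theorem Sol.superlinear (h : Sol n R T f V u) {Vm : ℝ} {p q : ℝ} (hq1 : 1 < q) (hqp : q < p)
    (hf : ConvexOn ℝ (Ici 0) f) (hd : ContDiffOn ℝ 1 f (Ici 0))
    (hf_lim : Tendsto (fun s : ℝ => s ^ (-p) * f s) atTop (nhds 1))
    (hf_deriv : ∃ C₀ > 0, ∀ s ≥ (0:ℝ), |deriv f s| ≤ C₀ * (1 + s ^ (p - 1)))
    (hV0 : ∀ x ∈ ball (0 : EuclideanSpace ℝ (Fin n)) R, 0 ≤ V x)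
    (hVm : ∀ x ∈ ball (0 : EuclideanSpace ℝ (Fin n)) R, V x ≤ Vm)
    {rIn r₁ c₀ : ℝ} (hrIn : 0 < rIn) (hr₁ : rIn < r₁) (hr₁R : r₁ < R) (hc₀ : 0 < c₀)
    (hVc : ∀ x, rIn ≤ ‖x‖ → ‖x‖ ≤ r₁ → c₀ ≤ V x)
    {t₀ c h₀ : ℝ} (ht₀ : t₀ ∈ Ioo 0 T) (hc : 0 < c) (hh₀ : 0 < h₀)
    (hlow : ∀ k, 0 < k → k < h₀ → ∀ t, t₀ ≤ t → t + k < T →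
      ∀ x, ‖x‖ ≤ r₁ → c * k ≤ u (t + k) x - u t x) :
    ∃ δ > 0, ∀ t, t₀ ≤ t → t < T → ∀ x, ‖x‖ ≤ rIn →
      δ * u t x ^ q ≤ deriv (fun s => u s x) t := by
  have hp : 1 < p := hq1.trans hqp
  obtain ⟨Sf, hSf1, k2, hk2, hsup⟩ := f_super hp hqp hf hd hf_lim
  obtain ⟨C₀, hC₀, hfd⟩ := hf_deriv
  obtain ⟨χ, d1, d2, M, hM, hχc, hχ0, hχ1, hχin, hχout, hχs, hχM, hχz⟩ := bump_data n hrIn hr₁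
  have hballR : ∀ x : EuclideanSpace ℝ (Fin n), ‖x‖ ≤ r₁ → x ∈ ball (0 : EuclideanSpace ℝ (Fin n)) R := by
    intro x hx; rw [mem_ball_zero_iff]; linarith
  have hVm0 : 0 ≤ Vm := (hV0 0 (hballR 0 (by simp; linarith))).trans (hVm 0 (hballR 0 (by simp; linarith)))
  set k := 2 * q / (p - 1) with hk
  have hp1 : 0 < p - 1 := by linarith
  have hk0 : 0 < k := by positivity
  set CC : ℝ → ℝ := fun M => |k * (k - 1)| * M ^ 2 + k * M + k ^ 2 * q / (q - 1) * M ^ 2 with hCC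
  have hCC0 : 0 ≤ CC M := by
    have : 0 < q - 1 := by linarith
    simp only [hCC]; positivity
  -- bound of u(t₀)
  obtain ⟨U0, hU0⟩ := (isCompact_closedBall (0 : EuclideanSpace ℝ (Fin n)) r₁).exists_bound_of_continuousOn
    (f := fun x => u t₀ x) (fun x hx => (h.dx t₀ ht₀ x (hballR x (by simpa using hx))).continuousAt.continuousWithinAt)
  have hU0n : 0 ≤ U0 := (norm_nonneg _).trans (hU0 0 (by simp; linarith))
  set Q := (n * CC M / (c₀ * k2)) ^ (q / (p - 1)) with hQ
  have hQ0 : 0 ≤ Q := by positivity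
  have hSq : 0 ≤ Sf ^ q := by positivity
  have hUq : 0 ≤ U0 ^ q := by positivity
  set δ := c / (Sf ^ q + U0 ^ q + Q + 1) with hδ
  have hden : 0 < Sf ^ q + U0 ^ q + Q + 1 := by positivity
  have hδ0 : 0 < δ := by positivity
  have hδmul : δ * (Sf ^ q + U0 ^ q + Q + 1) = c := by rw [hδ]; field_simp
  refine ⟨δ, hδ0, ?_⟩
  intro t₃ ht₃ ht₃T x₃ hx₃
  have ht1 := ht₀.1
  have ht2 := ht₀.2
  have hmain : ∀ hh : ℝ, 0 < hh → hh < h₀ → t₃ + hh < T →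
      δ * u t₃ x₃ ^ q ≤ hh⁻¹ * (u (t₃ + hh) x₃ - u t₃ x₃) := by
    intro hh hh0 hhh hht
    let S : Set (ℝ × EuclideanSpace ℝ (Fin n)) := Icc t₀ t₃ ×ˢ closedBall 0 r₁
    have hSc : IsCompact S := isCompact_Icc.prod (isCompact_closedBall 0 r₁)
    have hTt : ∀ t, t ∈ Icc t₀ t₃ → t ∈ Ioo 0 T ∧ t + hh ∈ Ioo 0 T := fun t ht =>
      ⟨⟨by linarith [ht.1], by linarith [ht.2]⟩, ⟨by linarith [ht.1], by linarith [ht.2]⟩⟩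
    let J : ℝ → EuclideanSpace ℝ (Fin n) → ℝ := fun t x =>
      hh⁻¹ * (u (t + hh) x - u t x) - δ * (χ x ^ k * u t x ^ q)
    have hucont : ContinuousOn (fun q : ℝ × EuclideanSpace ℝ (Fin n) => u q.1 q.2) S := by
      rintro ⟨t, x⟩ ⟨h1, h2⟩
      exact (h.continuousAt (hTt t h1).1 (hballR x (by simpa using h2))).continuousWithinAt
    obtain ⟨Mu, hMu⟩ := hSc.exists_bound_of_continuousOn hucont
    have hMun : 0 ≤ Mu := (norm_nonneg _).trans (hMu (t₃, x₃) ⟨⟨ht₃, le_rfl⟩, by simp; linarith⟩)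
    have key := min_principle S hSc J ?_ (Vm * (C₀ * (1 + Mu ^ (p - 1))) + 1) ?_ t₃ x₃
      ⟨⟨ht₃, le_rfl⟩, by simp; linarith⟩
    · simp only [J] at key
      rw [hχin x₃ hx₃, Real.one_rpow, one_mul] at key
      linarith
    · rintro ⟨t, x⟩ ⟨h1, h2⟩
      simp only at h1 h2
      have hxR := hballR x (by simpa using h2)
      have c1 := h.continuousAt (hTt t h1).1 hxR
      have c2 := h.continuousAt (hTt t h1).2 hxR
      have c3 : ContinuousAt (fun q : ℝ × EuclideanSpace ℝ (Fin n) => u (q.1 + hh) q.2) (t, x) := by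
        have hmap : ContinuousAt (fun q : ℝ × EuclideanSpace ℝ (Fin n) => (q.1 + hh, q.2)) (t, x) := by
          fun_prop
        exact ContinuousAt.comp (f := fun q : ℝ × EuclideanSpace ℝ (Fin n) => (q.1 + hh, q.2))
          (g := fun q : ℝ × EuclideanSpace ℝ (Fin n) => u q.1 q.2) c2 hmap
      have c4 : ContinuousAt (fun q : ℝ × EuclideanSpace ℝ (Fin n) => χ q.2 ^ k) (t, x) :=
        (hχc.comp continuous_snd).continuousAt.rpow_const (Or.inr hk0.le)
      have c5 : ContinuousAt (fun z : ℝ × EuclideanSpace ℝ (Fin n) => u z.1 z.2 ^ q) (t, x) :=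
        c1.rpow_const (Or.inr (by linarith))
      exact (((c3.sub c1).const_mul _).sub ((c4.mul c5).const_mul _)).continuousWithinAt
    · rintro t x ⟨h1, h2⟩ hneg
      simp only at h1 h2
      have hx1 : ‖x‖ ≤ r₁ := by simpa using h2
      have hxR := hballR x hx1
      have hun := h.nonneg t (hTt t h1).1 x hxR
      have hz := hlow hh hh0 hhh t h1.1 (hTt t h1).2.2 x hx1
      have hzc : c ≤ hh⁻¹ * (u (t + hh) x - u t x) := by
        rw [inv_mul_eq_div, le_div_iff₀ hh0]; exact hz
      have hbig : c < δ * (χ x ^ k * u t x ^ q) := by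
        simp only [J] at hneg; linarith
      have hχk1 : χ x ^ k ≤ 1 := Real.rpow_le_one (hχ0 x) (hχ1 x) hk0.le
      have hχk0 : 0 ≤ χ x ^ k := Real.rpow_nonneg (hχ0 x) k
      have huq0 : 0 ≤ u t x ^ q := Real.rpow_nonneg hun q
      have hbig2 : c < δ * u t x ^ q := by
        refine hbig.trans_le (mul_le_mul_of_nonneg_left ?_ hδ0.le)
        exact mul_le_of_le_one_left huq0 hχk1
      have hX : 0 < χ x := by
        rcases (hχ0 x).eq_or_lt with h3 | h3
        · exfalso
          rw [← h3, Real.zero_rpow hk0.ne'] at hbig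
          simp at hbig; linarith
        · exact h3
      have hxlt : ‖x‖ < r₁ := by
        by_contra h3
        rw [hχout x (not_lt.1 h3)] at hX
        exact lt_irrefl _ hX
      have hltof : ∀ y, 0 ≤ y → y ^ q ≤ Sf ^ q + U0 ^ q + Q + 1 → y < u t x := by
        intro y hy hy2
        have h3 : δ * y ^ q < δ * u t x ^ q :=
          lt_of_le_of_lt ((mul_le_mul_of_nonneg_left hy2 hδ0.le).trans hδmul.le) hbig2
        have h4 := lt_of_mul_lt_mul_left h3 hδ0.le
        exact (Real.rpow_lt_rpow_iff hy hun (by linarith)).1 h4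
      have hUS : Sf < u t x := hltof Sf (by linarith) (by linarith)
      have hUU : U0 < u t x := hltof U0 hU0n (by linarith)
      have hU : 0 < u t x := by linarith
      have htgt : t₀ < t := by
        rcases h1.1.eq_or_lt with h3 | h3
        · exfalso
          have h4 := hU0 x h2
          rw [h3, Real.norm_of_nonneg hun] at h4
          linarith
        · exact h3
      have hXU : n * CC M / (c₀ * k2) ≤ χ x ^ 2 * u t x ^ (p - 1) := by
        have h3 : Q < χ x ^ k * u t x ^ q := by
          have : δ * Q < δ * (χ x ^ k * u t x ^ q) := by
            refine lt_of_le_of_lt ?_ hbig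
            rw [← hδmul]
            exact mul_le_mul_of_nonneg_left (by linarith) hδ0.le
          exact lt_of_mul_lt_mul_left this hδ0.le
        have h4 : Q ^ ((p - 1) / q) ≤ (χ x ^ k * u t x ^ q) ^ ((p - 1) / q) :=
          Real.rpow_le_rpow hQ0 h3.le (by positivity)
        have h5 : Q ^ ((p - 1) / q) = n * CC M / (c₀ * k2) := by
          rw [hQ, ← Real.rpow_mul (by positivity)]
          rw [show q / (p - 1) * ((p - 1) / q) = 1 by field_simp, Real.rpow_one]
        have h6 : (χ x ^ k * u t x ^ q) ^ ((p - 1) / q) = χ x ^ 2 * u t x ^ (p - 1) := by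
          rw [Real.mul_rpow hχk0 huq0, ← Real.rpow_mul (hχ0 x), ← Real.rpow_mul hun]
          rw [show k * ((p - 1) / q) = ((2:ℕ):ℝ) by rw [hk]; push_cast; field_simp,
            show q * ((p - 1) / q) = p - 1 by field_simp, Real.rpow_natCast]
        rwa [h5, h6] at h4
      refine ⟨?_, ?_, ?_⟩
      · filter_upwards [Ioo_mem_nhdsLT htgt] with s hs
        exact ⟨⟨hs.1.le, hs.2.le.trans h1.2⟩, h2⟩
      · filter_upwards [isOpen_ball.mem_nhds (show x ∈ ball (0 : EuclideanSpace ℝ (Fin n)) r₁ by simpa using hxlt)] with y hy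
        exact ⟨h1, ball_subset_closedBall hy⟩
      have hut := h.hasDerivAt (hTt t h1).1 hxR
      have hJt := (((h.hasDerivAt_shift (hTt t h1).2 hxR).sub hut).const_mul hh⁻¹).sub
        (((hut.rpow_const (p := q) (Or.inl hU.ne')).const_mul (χ x ^ k)).const_mul δ)
      have hsu := fun i => hasSecond_of_contDiffAt (h.dx _ (hTt t h1).1 x hxR) i
      have hX' : ∀ i : Fin n, 0 < χ (x + (0:ℝ) • EuclideanSpace.single i 1) := fun i => by simpa using hX
      have hU' : ∀ i : Fin n, 0 < u t (x + (0:ℝ) • EuclideanSpace.single i 1) := fun i => by simpa using hU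
      have hD := fun i => (((hasSecond_of_contDiffAt (h.dx _ (hTt t h1).2 x hxR) i).sub
        (hsu i)).const_mul hh⁻¹).sub
        ((((hχs i x).rpow k (hX' i)).mul ((hsu i).rpow q (hU' i))).const_mul δ)
      refine ⟨_, _, _, hJt, hD, ?_⟩
      simp only [zero_smul, add_zero, J]
      rw [Finset.sum_sub_distrib, ← Finset.mul_sum, ← Finset.mul_sum, Finset.sum_sub_distrib]
      change _ < _ - (hh⁻¹ * (lap (fun y => u (t + hh) y) x - lap (fun y => u t y) x) - _)
      have hVx := hV0 x hxR
      have hLx : V x * deriv f (u t x) < Vm * (C₀ * (1 + Mu ^ (p - 1))) + 1 := by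
        have h3 := hfd (u t x) hun
        have h4 : u t x ≤ Mu := by
          have := hMu (t, x) ⟨h1, h2⟩
          rwa [Real.norm_of_nonneg hun] at this
        have h5 : deriv f (u t x) ≤ C₀ * (1 + Mu ^ (p - 1)) := by
          refine (le_abs_self _).trans (h3.trans ?_)
          gcongr
        have h6 : V x * deriv f (u t x) ≤ Vm * (C₀ * (1 + Mu ^ (p - 1))) :=
          (mul_le_mul_of_nonneg_left h5 hVx).trans (mul_le_mul_of_nonneg_right (hVm x hxR) (by positivity))
        linarith
      have htan := convex_tangent hf hd (h.nonneg _ (hTt t h1).2 x hxR) hU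
      have hs := hsup _ hUS.le
      have hBsum : ∀ M', (∀ i, |d1 i x| ≤ M' ∧ |d2 i x| ≤ M') →
        χ x ^ k * (q * u t x ^ (q - 1) * lap (fun y => u t y) x) - n * (CC M' * χ x ^ (k - 2) * u t x ^ q) ≤
          ∑ i, ((k * (k - 1) * χ x ^ (k - 2) * d1 i x ^ 2 + k * χ x ^ (k - 1) * d2 i x) * u t x ^ q +
      2 * (k * χ x ^ (k - 1) * d1 i x) * (q * u t x ^ (q - 1) * fderiv ℝ (fun y => u t y) x (EuclideanSpace.single i 1)) +
      χ x ^ k * (q * (q - 1) * u t x ^ (q - 2) * fderiv ℝ (fun y => u t y) x (EuclideanSpace.single i 1) ^ 2 +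
        q * u t x ^ (q - 1) * fderiv ℝ (fun y => fderiv ℝ (fun y => u t y) y (EuclideanSpace.single i 1)) x
    (EuclideanSpace.single i 1))) := by
        intro M' hM'
        have := Finset.sum_le_sum (s := Finset.univ) fun i _ => bracket_lower (w := fderiv ℝ (fun y => fderiv ℝ (fun y => u t y) y (EuclideanSpace.single i 1)) x
          (EuclideanSpace.single i 1)) (v := fderiv ℝ (fun y => u t y) x (EuclideanSpace.single i 1)) hk0 hq1 hX (hχ1 x) hU (hM' i).1 (hM' i).2
        refine le_trans (le_of_eq ?_) this
        rw [Finset.sum_sub_distrib, ← Finset.mul_sum, ← Finset.mul_sum]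
        simp only [lap, hCC, Finset.sum_const, Finset.card_univ, Fintype.card_fin, nsmul_eq_mul]
      by_cases hin : ‖x‖ < rIn
      · have hB := hBsum 0 (fun i => by rw [(hχz i x hin).1, (hχz i x hin).2]; simp)
        exact sup_alg hX hU hVx (inv_pos.2 hh0) hδ0 hB htan hs (by
          have : CC 0 = 0 := by simp [hCC]
          rw [this, mul_zero]; positivity) hLx hneg
      · have hB := hBsum M (fun i => hχM i x hx1)
        have hVx' := hVc x (not_lt.1 hin) hx1
        refine sup_alg hX hU hVx (inv_pos.2 hh0) hδ0 hB htan hs ?_ hLx hneg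
        rw [div_le_iff₀ (by positivity)] at hXU
        have h7 : (χ x ^ 2 * u t x ^ (p - 1)) * (c₀ * k2) ≤ (χ x ^ 2 * u t x ^ (p - 1)) * (V x * k2) := by
          gcongr
        linarith
  -- pass to the limit
  have hder := (h.dt t₃ ⟨by linarith, ht₃T⟩ x₃ (hballR x₃ (by linarith))).hasDerivAt
  have hslope := (hasDerivWithinAt_iff_tendsto_slope' (s := Ioi t₃) (by simp)).1 hder.hasDerivWithinAt
  refine ge_of_tendsto hslope ?_
  have hlt : t₃ < min (t₃ + h₀) T := lt_min (by linarith) ht₃T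
  filter_upwards [Ioo_mem_nhdsGT hlt] with s hs
  have h3 := hs.2.trans_le (min_le_left _ _)
  have h4 := hs.2.trans_le (min_le_right _ _)
  have := hmain (s - t₃) (by linarith [hs.1]) (by linarith) (by linarith)
  rw [add_sub_cancel] at this
  rw [slope_def_field]
  rwa [inv_mul_eq_div] at this

end


theorem typeI_ode {T t₀ δ q : ℝ} (hq : 1 < q) (hδ : 0 < δ) {v : ℝ → ℝ}
    (hv0 : ∀ t, t₀ ≤ t → t < T → 0 ≤ v t)
    (hv : ∀ t, t₀ ≤ t → t < T → DifferentiableAt ℝ v t)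
    (hvq : ∀ t, t₀ ≤ t → t < T → δ * v t ^ q ≤ deriv v t) {t : ℝ} (ht : t₀ ≤ t) (htT : t < T) :
    v t ≤ ((q - 1) * δ) ^ (-(1 / (q - 1))) * (T - t) ^ (-(1 / (q - 1))) := by
  have hq1 : 0 < q - 1 := by linarith
  have hTt : 0 < T - t := by linarith
  rcases (hv0 t ht htT).eq_or_lt with h0 | h0
  · rw [← h0]; positivity
  have hmem : ∀ s ∈ Ico t T, t₀ ≤ s ∧ s < T := fun s hs => ⟨ht.trans hs.1, hs.2⟩
  have hmono : MonotoneOn v (Ico t T) := by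
    refine monotoneOn_of_deriv_nonneg (convex_Ico t T) ?_ ?_ ?_
    · exact fun s hs => (hv s (hmem s hs).1 (hmem s hs).2).continuousAt.continuousWithinAt
    · exact fun s hs => (hv s (hmem s (interior_subset hs)).1
        (hmem s (interior_subset hs)).2).differentiableWithinAt
    · intro s hs
      have hs' := hmem s (interior_subset hs)
      exact le_trans (mul_nonneg hδ.le (Real.rpow_nonneg (hv0 s hs'.1 hs'.2) q)) (hvq s hs'.1 hs'.2)
  have hpos : ∀ s ∈ Ico t T, 0 < v s := fun s hs => h0.trans_le (hmono ⟨le_rfl, htT⟩ hs hs.1)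
  have hder : ∀ s ∈ Ico t T, HasDerivAt (fun s => v s ^ (1 - q) + (q - 1) * δ * s)
      (deriv v s * (1 - q) * v s ^ (1 - q - 1) + (q - 1) * δ * 1) s := by
    intro s hs
    exact ((hv s (hmem s hs).1 (hmem s hs).2).hasDerivAt.rpow_const (Or.inl (hpos s hs).ne')).add
      ((hasDerivAt_id s).const_mul _)
  have hanti : AntitoneOn (fun s => v s ^ (1 - q) + (q - 1) * δ * s) (Ico t T) := by
    refine antitoneOn_of_deriv_nonpos (convex_Ico t T) ?_ ?_ ?_
    · exact fun s hs => (hder s hs).continuousAt.continuousWithinAt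
    · exact fun s hs => (hder s (interior_subset hs)).differentiableAt.differentiableWithinAt
    · intro s hs
      have hs' := interior_subset hs
      rw [(hder s hs').deriv]
      have h1 := hvq s (hmem s hs').1 (hmem s hs').2
      have hp := hpos s hs'
      have h2 : v s ^ q * v s ^ (1 - q - 1) = 1 := by
        rw [← Real.rpow_add hp]; simp
      have h3 := mul_le_mul_of_nonneg_right h1 (mul_nonneg hq1.le (Real.rpow_nonneg hp.le (1 - q - 1)))
      have h4 : δ * v s ^ q * ((q - 1) * v s ^ (1 - q - 1)) = (q - 1) * δ := by
        rw [show δ * v s ^ q * ((q - 1) * v s ^ (1 - q - 1)) = (q - 1) * δ * (v s ^ q * v s ^ (1 - q - 1)) by ring,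
          h2, mul_one]
      have h5 : deriv v s * (1 - q) * v s ^ (1 - q - 1) = -(deriv v s * ((q - 1) * v s ^ (1 - q - 1))) := by ring
      linarith
  have hlim : (q - 1) * δ * (T - t) ≤ v t ^ (1 - q) := by
    have hb : ∀ s ∈ Ioo t T, (q - 1) * δ * (s - t) ≤ v t ^ (1 - q) := by
      intro s hs
      have h1 := hanti ⟨le_rfl, htT⟩ ⟨hs.1.le, hs.2⟩ hs.1.le
      simp only at h1
      have h2 := Real.rpow_nonneg (hpos s ⟨hs.1.le, hs.2⟩).le (1 - q)
      linarith
    have hc : Tendsto (fun s : ℝ => (q - 1) * δ * (s - t)) (nhdsWithin T (Iio T)) (nhds ((q - 1) * δ * (T - t))) := by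
      have : Continuous (fun s : ℝ => (q - 1) * δ * (s - t)) := by fun_prop
      exact (this.tendsto T).mono_left nhdsWithin_le_nhds
    refine le_of_tendsto hc ?_
    filter_upwards [Ioo_mem_nhdsLT htT] with s hs using hb s hs
  have h6 : v t = (v t ^ (1 - q)) ^ (-(1 / (q - 1))) := by
    rw [← Real.rpow_mul h0.le, show (1 - q) * (-(1 / (q - 1))) = 1 by field_simp; ring, Real.rpow_one]
  rw [h6, ← Real.mul_rpow (by positivity) hTt.le]
  exact Real.rpow_le_rpow_of_nonpos (by positivity) hlim (by
    rw [neg_nonpos]; positivity)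

/-- The pointwise inequality for the final supersolution. -/
theorem fin_alg {K m p κ β C τ ρ s Y b hd N W ν fw : ℝ} (hK : 0 < K) (hm : 0 < m)
    (hκ : 0 < κ) (hκ4 : κ ≤ 1 / 4) (hmp : m * (p - 1) = 2 + 2 * κ) (hs : 0 < s) (hsτ : s ≤ τ)
    (hYs : √s ≤ Y) (hYτ : Y ≤ √τ) (hρ : 0 < ρ) (hb : b = √τ / ρ ^ 2) (hN : N ≤ ρ ^ 2)
    (hν : 0 ≤ ν)
    (hhd : hd = -(τ ^ κ / 2 * (1 / 2 - κ) * s ^ (-1 / 2 - κ)))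
    (hsmall : (4 * (m + 1) + 2 * ν) * (τ / ρ ^ 2) ≤ 1 / 16)
    (hW : W ≤ C * ρ ^ β) (hW0 : 0 ≤ W) (hCρ : C * ρ ^ β * (2 * K ^ (p - 1)) ≤ m / 32 * τ ^ κ)
    (hfw : fw ≤ 2 * (K * Y ^ (-m)) ^ p) :
    W * fw < K * (hd * (-m) * Y ^ (-m - 1)) -
      K * (m * (m + 1) * Y ^ (-m - 2) * (4 * b ^ 2 * N) + m * Y ^ (-m - 1) * (2 * b * ν)) := by
  have hτ : 0 < τ := hs.trans_le hsτ
  have hY : 0 < Y := (Real.sqrt_pos.2 hs).trans_le hYs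
  set A := Y ^ (-m - 2) with hA
  have hA0 : 0 < A := Real.rpow_pos_of_pos hY _
  have eY : Y ^ (-m - 1) = A * Y := by rw [hA, ← Real.rpow_add_one hY.ne']; congr 1; ring
  set X := τ ^ κ * s ^ (-κ) with hX
  have hτκ : 0 < τ ^ κ := Real.rpow_pos_of_pos hτ _
  have hsκ : 0 < s ^ (-κ) := Real.rpow_pos_of_pos hs _
  have hX1 : 1 ≤ X := by
    rw [hX, Real.rpow_neg hs.le, ← div_eq_mul_inv, le_div_iff₀ (Real.rpow_pos_of_pos hs _), one_mul]
    exact Real.rpow_le_rpow hs.le hsτ hκ.le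
  -- reaction term
  have r1 : (K * Y ^ (-m)) ^ p = K ^ (p - 1) * K * (A * Y ^ (-(2 * κ))) := by
    rw [Real.mul_rpow hK.le (Real.rpow_nonneg hY.le _), ← Real.rpow_mul hY.le, hA, ← Real.rpow_add hY,
      ← Real.rpow_add_one hK.ne']
    congr 2
    · ring
    · linarith
  have r2 : Y ^ (-(2 * κ)) ≤ s ^ (-κ) := by
    have h1 : Y ^ (-(2 * κ)) ≤ (√s) ^ (-(2 * κ)) :=
      Real.rpow_le_rpow_of_nonpos (Real.sqrt_pos.2 hs) hYs (by linarith)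
    have h2 : (√s) ^ (-(2 * κ)) = s ^ (-κ) := by
      rw [Real.sqrt_eq_rpow, ← Real.rpow_mul hs.le]; congr 1; ring
    linarith
  have hKp : 0 < K ^ (p - 1) := Real.rpow_pos_of_pos hK _
  have hCn : 0 ≤ C * ρ ^ β := hW0.trans hW
  have r3 : W * fw ≤ m / 32 * X * (K * A) := by
    calc W * fw ≤ W * (2 * (K * Y ^ (-m)) ^ p) := by gcongr
      _ = W * (2 * K ^ (p - 1)) * (K * A) * Y ^ (-(2 * κ)) := by rw [r1]; ring
      _ ≤ C * ρ ^ β * (2 * K ^ (p - 1)) * (K * A) * s ^ (-κ) := by gcongr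
      _ ≤ m / 32 * τ ^ κ * (K * A) * s ^ (-κ) := by gcongr
      _ = m / 32 * X * (K * A) := by rw [hX]; ring
  -- diffusion terms
  have d1 : X / 8 ≤ -hd * Y := by
    have h1 : s ^ (-1 / 2 - κ) * √s = s ^ (-κ) := by
      rw [Real.sqrt_eq_rpow, ← Real.rpow_add hs]; congr 1; ring
    have h2 : 0 < s ^ (-1 / 2 - κ) := Real.rpow_pos_of_pos hs _
    have h3 : s ^ (-1 / 2 - κ) * √s ≤ s ^ (-1 / 2 - κ) * Y := by gcongr
    rw [h1] at h3
    calc X / 8 = τ ^ κ / 2 * (1 / 4) * s ^ (-κ) := by rw [hX]; ring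
      _ ≤ τ ^ κ / 2 * (1 / 2 - κ) * (s ^ (-1 / 2 - κ) * Y) := by
          have g0 : 0 ≤ 1 / 2 - κ := by linarith
          gcongr
          linarith
      _ = -hd * Y := by rw [hhd]; ring
  have d2 : b ^ 2 * N ≤ τ / ρ ^ 2 := by
    calc b ^ 2 * N ≤ b ^ 2 * ρ ^ 2 := by gcongr
      _ = τ / ρ ^ 2 := by rw [hb, div_pow, Real.sq_sqrt hτ.le]; field_simp
  have hb0 : 0 < b := by rw [hb]; positivity
  have d3 : b * Y ≤ τ / ρ ^ 2 := by
    calc b * Y ≤ b * √τ := by gcongr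
      _ = τ / ρ ^ 2 := by rw [hb, div_mul_eq_mul_div, Real.mul_self_sqrt hτ.le]
  have d4 : X / 16 ≤ -hd * Y - (m + 1) * (4 * (b ^ 2 * N)) - 2 * ν * (b * Y) := by
    have h1 : (m + 1) * (4 * (b ^ 2 * N)) ≤ (m + 1) * (4 * (τ / ρ ^ 2)) := by gcongr
    have h2 : 2 * ν * (b * Y) ≤ 2 * ν * (τ / ρ ^ 2) := by gcongr
    linarith
  have d5 := mul_le_mul_of_nonneg_left d4 (by positivity : 0 ≤ m * (K * A))
  have d6 : m / 32 * X * (K * A) < m * (K * A) * (X / 16) := by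
    have : 0 < m * (K * A) * X := by positivity
    linarith
  rw [eY]
  linarith



section
variable {n : ℕ} {R T : ℝ} {f : ℝ → ℝ} {V : EuclideanSpace ℝ (Fin n) → ℝ}
    {u : ℝ → EuclideanSpace ℝ (Fin n) → ℝ}

set_option maxHeartbeats 1000000 in
theorem Sol.compare (h : Sol n R T f V u) {Vm p κ β C K q₁ S₀ t₀ rIn τ ρ : ℝ}
    (hf : ConvexOn ℝ (Ici 0) f)
    (hV0 : ∀ x ∈ ball (0 : EuclideanSpace ℝ (Fin n)) R, 0 ≤ V x)
    (hVm : ∀ x ∈ ball (0 : EuclideanSpace ℝ (Fin n)) R, V x ≤ Vm)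
    {x₀ : EuclideanSpace ℝ (Fin n)}
    (hβ : 0 < β) (hC : 0 ≤ C)
    (hVC : ∀ x ∈ ball (0 : EuclideanSpace ℝ (Fin n)) R, V x ≤ C * ‖x - x₀‖ ^ β)
    (hκ : 0 < κ) (hκ4 : κ ≤ 1 / 4) (hq₁ : 0 < q₁) (hmp : 2 * q₁ * (p - 1) = 2 + 2 * κ)
    (hS₀ : 1 ≤ S₀) (hfS : ∀ s ≥ S₀, f s ≤ 2 * s ^ p) (hKS : S₀ ≤ K)
    (ht₀ : t₀ ∈ Ioo 0 T) (hrIn : rIn < R)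
    (htype : ∀ t, t₀ ≤ t → t < T → ∀ x, ‖x‖ ≤ rIn → u t x ≤ K * (T - t) ^ (-q₁))
    (hτ : 0 < τ) (hτ1 : τ ≤ 1) (hτT : τ ≤ T - t₀) (hρ : 0 < ρ) (hρR : ‖x₀‖ + ρ ≤ rIn)
    (hsmall : (4 * (2 * q₁ + 1) + 2 * (n : ℝ)) * (τ / ρ ^ 2) ≤ 1 / 16)
    (hCρ : C * ρ ^ β * (2 * K ^ (p - 1)) ≤ 2 * q₁ / 32 * τ ^ κ) :
    ∀ t x, T - τ / 16 ≤ t → t < T → ‖x - x₀‖ ≤ ρ / 2 → u t x ≤ K * (√τ / 4) ^ (-(2 * q₁)) := by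
  intro t₃ x₃ ht₃ ht₃T hx₃
  obtain ⟨ht1, ht2⟩ := ht₀
  set m := 2 * q₁ with hm
  have hm0 : 0 < m := by positivity
  have hK0 : 0 < K := by linarith
  set b := √τ / ρ ^ 2 with hb
  have hsτ : 0 < √τ := Real.sqrt_pos.2 hτ
  have hb0 : 0 < b := by positivity
  have hbρ : b * ρ ^ 2 = √τ := by rw [hb]; field_simp
  let χ : ℝ → EuclideanSpace ℝ (Fin n) → ℝ := fun t x =>
    τ ^ κ / 2 * (T - t) ^ (1 / 2 - κ) + √τ / 2 - b * ‖x - x₀‖ ^ 2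
  have hχc : Continuous (fun q : ℝ × EuclideanSpace ℝ (Fin n) => χ q.1 q.2) := by
    have h1 : Continuous (fun q : ℝ × EuclideanSpace ℝ (Fin n) => (T - q.1) ^ (1 / 2 - κ)) :=
      (continuous_const.sub continuous_fst).rpow_const (fun _ => Or.inr (by linarith))
    have h2 : Continuous (fun q : ℝ × EuclideanSpace ℝ (Fin n) => b * ‖q.2 - x₀‖ ^ 2) := by fun_prop
    exact ((continuous_const.mul h1).add continuous_const).sub h2
  have hχle : ∀ t x, T - τ ≤ t → t < T → χ t x ≤ √τ - b * ‖x - x₀‖ ^ 2 := by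
    intro t x ht htT
    have h1 : (T - t) ^ (1 / 2 - κ) ≤ τ ^ (1 / 2 - κ) :=
      Real.rpow_le_rpow (by linarith) (by linarith) (by linarith)
    have h2 : τ ^ κ / 2 * (T - t) ^ (1 / 2 - κ) ≤ τ ^ κ / 2 * τ ^ (1 / 2 - κ) := by gcongr
    have h3 : τ ^ κ / 2 * τ ^ (1 / 2 - κ) = √τ / 2 := by
      rw [div_mul_eq_mul_div, ← Real.rpow_add hτ, Real.sqrt_eq_rpow]; congr 2; ring
    simp only [χ]; linarith
  let S : Set (ℝ × EuclideanSpace ℝ (Fin n)) :=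
    {q | q.1 ∈ Icc (T - τ) t₃ ∧ √(T - q.1) ≤ χ q.1 q.2}
  have hSin : ∀ t x, t ∈ Icc (T - τ) t₃ → √(T - t) ≤ χ t x →
      0 < χ t x ∧ χ t x ≤ √τ ∧ ‖x - x₀‖ ^ 2 ≤ ρ ^ 2 ∧ ‖x - x₀‖ ≤ ρ ∧ ‖x‖ ≤ rIn := by
    intro t x ht hx
    have h1 : 0 < √(T - t) := Real.sqrt_pos.2 (by linarith [ht.2])
    have h2 := hχle t x ht.1 (by linarith [ht.2])
    have h3 : b * ‖x - x₀‖ ^ 2 ≤ b * ρ ^ 2 := by linarith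
    have h4 : ‖x - x₀‖ ^ 2 ≤ ρ ^ 2 := le_of_mul_le_mul_left h3 hb0
    have h5 : ‖x - x₀‖ ≤ ρ := le_of_sq_le_sq h4 hρ.le
    have h6 : 0 ≤ b * ‖x - x₀‖ ^ 2 := by positivity
    refine ⟨by linarith, by linarith, h4, h5, ?_⟩
    have : ‖x‖ ≤ ‖x - x₀‖ + ‖x₀‖ := by simpa using norm_add_le (x - x₀) x₀
    linarith
  have hSc : IsCompact S := by
    refine IsCompact.of_isClosed_subset (isCompact_Icc.prod (isCompact_closedBall 0 rIn)) ?_ ?_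
      (s := Icc (T - τ) t₃ ×ˢ closedBall (0 : EuclideanSpace ℝ (Fin n)) rIn)
    · exact (isClosed_Icc.preimage continuous_fst).inter
        (isClosed_le (by fun_prop) hχc)
    · rintro ⟨t, x⟩ ⟨h1, h2⟩
      exact ⟨h1, by simpa using (hSin t x h1 h2).2.2.2.2⟩
  have hballR : ∀ x : EuclideanSpace ℝ (Fin n), ‖x‖ ≤ rIn → x ∈ ball (0 : EuclideanSpace ℝ (Fin n)) R := by
    intro x hx; rw [mem_ball_zero_iff]; linarith
  have hTt : ∀ t, t ∈ Icc (T - τ) t₃ → t ∈ Ioo 0 T ∧ t₀ ≤ t := fun t ht =>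
    ⟨⟨by linarith [ht.1], by linarith [ht.2]⟩, by linarith [ht.1]⟩
  have hucont : ContinuousOn (fun q : ℝ × EuclideanSpace ℝ (Fin n) => u q.1 q.2) S := by
    rintro ⟨t, x⟩ ⟨h1, h2⟩
    exact (h.continuousAt (hTt t h1).1 (hballR x (hSin t x h1 h2).2.2.2.2)).continuousWithinAt
  have hχ3 : √τ / 4 ≤ χ t₃ x₃ := by
    have h1 : 0 ≤ τ ^ κ / 2 * (T - t₃) ^ (1 / 2 - κ) := by
      have := Real.rpow_nonneg (by linarith : 0 ≤ T - t₃) (1 / 2 - κ)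
      positivity
    have h2 : b * ‖x₃ - x₀‖ ^ 2 ≤ b * (ρ / 2) ^ 2 := by gcongr
    have h3 : b * (ρ / 2) ^ 2 = √τ / 4 := by rw [← hbρ]; ring
    simp only [χ]; linarith
  have hmem3 : (t₃, x₃) ∈ S := by
    refine ⟨⟨by linarith, le_rfl⟩, ?_⟩
    refine le_trans ?_ hχ3
    rw [show √τ / 4 = √(τ / 16) by
      rw [Real.sqrt_div hτ.le, show (16:ℝ) = 4 ^ 2 by norm_num, Real.sqrt_sq (by norm_num)]]
    exact Real.sqrt_le_sqrt (by linarith)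
  obtain ⟨Mu, hMu⟩ := hSc.exists_bound_of_continuousOn hucont
  let J : ℝ → EuclideanSpace ℝ (Fin n) → ℝ := fun t x => K * χ t x ^ (-m) - u t x
  have key := min_principle S hSc J ?_ (Vm * |f (Mu + 1) - f Mu|) ?_ t₃ x₃ hmem3
  · simp only [J] at key
    have h1 : χ t₃ x₃ ^ (-m) ≤ (√τ / 4) ^ (-m) :=
      Real.rpow_le_rpow_of_nonpos (by positivity) hχ3 (by linarith)
    have h2 := mul_le_mul_of_nonneg_left h1 hK0.le
    linarith
  · rintro ⟨t, x⟩ ⟨h1, h2⟩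
    simp only at h1 h2
    have h3 := hSin t x h1 h2
    have c1 := h.continuousAt (hTt t h1).1 (hballR x h3.2.2.2.2)
    have c2 : ContinuousAt (fun q : ℝ × EuclideanSpace ℝ (Fin n) => χ q.1 q.2 ^ (-m)) (t, x) :=
      hχc.continuousAt.rpow_const (Or.inl h3.1.ne')
    exact ((c2.const_mul K).sub c1).continuousWithinAt
  · rintro t x ⟨h1, h2⟩ hneg
    simp only at h1 h2
    obtain ⟨hY0, hYτ, hNρ, -, hxr⟩ := hSin t x h1 h2
    have hxR := hballR x hxr
    have hTs : 0 < T - t := by linarith [(hTt t h1).1.2]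
    have hJneg : K * χ t x ^ (-m) < u t x := by simp only [J] at hneg; linarith
    have hlt : √(T - t) < χ t x := by
      rcases h2.eq_or_lt with h3 | h3
      · exfalso
        have h4 := htype t (hTt t h1).2 (hTt t h1).1.2 x hxr
        rw [← h3, Real.sqrt_eq_rpow, ← Real.rpow_mul hTs.le,
          show 1 / 2 * -m = -q₁ by rw [hm]; ring] at hJneg
        linarith
      · exact h3
    have htgt : T - τ < t := by
      rcases h1.1.eq_or_lt with h3 | h3
      · exfalso
        have : T - t = τ := by linarith
        rw [this] at hlt
        linarith
      · exact h3
    have hgn : ∀ᶠ q : ℝ × EuclideanSpace ℝ (Fin n) in nhds (t, x), √(T - q.1) < χ q.1 q.2 :=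
      (ContinuousAt.eventually_lt (by fun_prop) hχc.continuousAt hlt)
    refine ⟨?_, ?_, ?_⟩
    · have hl : Tendsto (fun s : ℝ => (s, x)) (nhds t) (nhds (t, x)) := by
        have : Continuous (fun s : ℝ => (s, x)) := by fun_prop
        exact this.tendsto t
      filter_upwards [mem_nhdsWithin_of_mem_nhds (hl.eventually hgn), Ioo_mem_nhdsLT htgt] with s hs1 hs2
      exact ⟨⟨hs2.1.le, hs2.2.le.trans h1.2⟩, le_of_lt hs1⟩
    · have hl : Tendsto (fun y => (t, y)) (nhds x) (nhds (t, x)) := by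
        have : Continuous (fun y : EuclideanSpace ℝ (Fin n) => (t, y)) := by fun_prop
        exact this.tendsto x
      filter_upwards [hl.eventually hgn] with y hy
      exact ⟨h1, le_of_lt hy⟩
    set hd := -(τ ^ κ / 2 * (1 / 2 - κ) * (T - t) ^ (-1 / 2 - κ)) with hhd
    have hχt : HasDerivAt (fun s => χ s x) hd t := by
      have a1 : HasDerivAt (fun s : ℝ => T - s) (-1) t := by
        simpa using (hasDerivAt_id t).const_sub T
      have a2 := ((((a1.rpow_const (p := 1 / 2 - κ) (Or.inl hTs.ne')).const_mul (τ ^ κ / 2)).add_const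
        (√τ / 2)).sub_const (b * ‖x - x₀‖ ^ 2))
      refine a2.congr_deriv ?_
      rw [hhd, show (1 / 2 - κ - 1) = -1 / 2 - κ by ring]; ring
    have hut := h.hasDerivAt (hTt t h1).1 hxR
    have hJt := ((hχt.rpow_const (p := -m) (Or.inl hY0.ne')).const_mul K).sub hut
    set ξ := x - x₀ with hξ
    have hline : ∀ i, HasSecond (fun s : ℝ => χ t (x + s • EuclideanSpace.single i 1))
        (-2 * b * ξ i) (2 * (-b)) := by
      intro i
      have := hasSecond_quad (χ t x) (-2 * b * ξ i) (-b)
      convert this using 2 with s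
      simp only [χ]
      rw [show x + s • EuclideanSpace.single i 1 - x₀
        = ξ + s • EuclideanSpace.single i 1 by rw [hξ]; abel, norm_line]
      ring
    have hY' : ∀ i : Fin n, 0 < χ t (x + (0:ℝ) • EuclideanSpace.single i 1) := fun i => by simpa using hY0
    have hD := fun i => (((hline i).rpow (-m) (hY' i)).const_mul K).sub
      (hasSecond_of_contDiffAt (h.dx _ (hTt t h1).1 x hxR) i)
    refine ⟨_, _, _, hJt, hD, ?_⟩
    simp only [zero_smul, add_zero, J]
    have hsum : ∑ i, K * (-m * (-m - 1) * χ t x ^ (-m - 2) * (-2 * b * ξ i) ^ 2 + -m * χ t x ^ (-m - 1) * (2 * -b))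
        = K * (m * (m + 1) * χ t x ^ (-m - 2) * (4 * b ^ 2 * ‖ξ‖ ^ 2) + m * χ t x ^ (-m - 1) * (2 * b * n)) := by
      rw [← Finset.mul_sum, ← norm_sq_sum]
      congr 1
      rw [Finset.sum_add_distrib, Finset.mul_sum, Finset.mul_sum]
      congr 1
      · exact Finset.sum_congr rfl fun i _ => by ring
      · simp; ring
    rw [Finset.sum_sub_distrib, hsum]
    change _ < _ - (_ - lap (fun y => u t y) x)
    have hVx := hV0 x hxR
    have hun := h.nonneg t (hTt t h1).1 x hxR
    have hw0 : 0 < χ t x ^ (-m) := Real.rpow_pos_of_pos hY0 _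
    have hw1 : 1 ≤ χ t x ^ (-m) := by
      have : χ t x ≤ 1 := hYτ.trans (by rw [Real.sqrt_le_one]; exact hτ1)
      exact Real.one_le_rpow_of_pos_of_le_one_of_nonpos hY0 this (by linarith)
    have hwS : S₀ ≤ K * χ t x ^ (-m) := hKS.trans (le_mul_of_one_le_right hK0.le hw1)
    have hWle : V x ≤ C * ρ ^ β := by
      refine (hVC x hxR).trans ?_
      have := (hSin t x h1 h2).2.2.2.1
      gcongr
    have halg := fin_alg (C := C) (β := β) hK0 hm0 hκ hκ4 hmp hTs (by linarith) h2 hYτ hρ hb hNρ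
      (Nat.cast_nonneg n) hhd hsmall hWle hVx hCρ (hfS _ hwS)
    have hslope := convex_slope_le hf (by positivity : 0 ≤ K * χ t x ^ (-m)) hJneg.le
      (show u t x ≤ Mu by
        have := hMu (t, x) ⟨h1, h2⟩
        rwa [Real.norm_of_nonneg hun] at this)
    have hz : 0 ≤ u t x - K * χ t x ^ (-m) := by linarith
    have s1 : V x * (f (u t x) - f (K * χ t x ^ (-m))) ≤ Vm * (|f (Mu + 1) - f Mu| * (u t x - K * χ t x ^ (-m))) := by
      have a1 : f (u t x) - f (K * χ t x ^ (-m)) ≤ |f (Mu + 1) - f Mu| * (u t x - K * χ t x ^ (-m)) :=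
        hslope.trans (mul_le_mul_of_nonneg_right (le_abs_self _) hz)
      exact (mul_le_mul_of_nonneg_left a1 hVx).trans
        (mul_le_mul_of_nonneg_right (hVm x hxR) (mul_nonneg (abs_nonneg _) hz))
    have s2 : Vm * |f (Mu + 1) - f Mu| * (K * χ t x ^ (-m) - u t x) = -(Vm * (|f (Mu + 1) - f Mu| * (u t x - K * χ t x ^ (-m)))) := by ring
    have s3 := mul_sub (V x) (f (u t x)) (f (K * χ t x ^ (-m)))
    linarith

end


theorem holder_continuousOn {n : ℕ} {V : EuclideanSpace ℝ (Fin n) → ℝ} {s : Set (EuclideanSpace ℝ (Fin n))}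
    {C β : ℝ} (hβ : 0 < β) (hV : ∀ x ∈ s, ∀ y ∈ s, |V x - V y| ≤ C * ‖x - y‖ ^ β) :
    ContinuousOn V s := by
  intro x hx
  rw [ContinuousWithinAt, tendsto_iff_norm_sub_tendsto_zero]
  have h1 : Tendsto (fun y => C * ‖y - x‖ ^ β) (nhdsWithin x s) (nhds 0) := by
    have hc : Continuous (fun y : EuclideanSpace ℝ (Fin n) => C * ‖y - x‖ ^ β) :=
      continuous_const.mul ((continuous_id.sub continuous_const).norm.rpow_const (fun _ => Or.inr hβ.le))
    have := (hc.tendsto x).mono_left (nhdsWithin_le_nhds (s := s))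
    simpa [Real.zero_rpow hβ.ne'] using this
  refine squeeze_zero' (Eventually.of_forall fun _ => norm_nonneg _) ?_ h1
  filter_upwards [self_mem_nhdsWithin] with y hy
  exact hV y hy x hx

theorem exists_collar {n : ℕ} (hn : 1 ≤ n) {R : ℝ} (hR : 0 < R) {V : EuclideanSpace ℝ (Fin n) → ℝ}
    (hVc : ContinuousOn V (closedBall 0 R)) (hV0 : ∀ x ∈ closedBall 0 R, 0 ≤ V x)
    (hrad : ∀ x ∈ closedBall 0 R, ∀ y ∈ closedBall 0 R, ‖x‖ = ‖y‖ → V x = V y)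
    {x₀ : EuclideanSpace ℝ (Fin n)} (hx₀ : x₀ ∈ ball 0 R) (hVx₀ : V x₀ = 0)
    (hcomp : connectedComponentIn {x ∈ closedBall 0 R | V x = 0} x₀ ∩ sphere 0 R = ∅) :
    ∃ rIn r₁ c₀ : ℝ, ‖x₀‖ < rIn ∧ rIn < r₁ ∧ r₁ < R ∧ 0 < c₀ ∧
      ∀ x, rIn ≤ ‖x‖ → ‖x‖ ≤ r₁ → c₀ ≤ V x := by
  have : ∃ e : EuclideanSpace ℝ (Fin n), ‖e‖ = 1 ∧ x₀ = ‖x₀‖ • e := by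
    by_cases hy : x₀ = 0
    · refine ⟨EuclideanSpace.single ⟨0, hn⟩ 1, by simp, by simp [hy]⟩
    · have : ‖x₀‖ ≠ 0 := norm_ne_zero_iff.2 hy
      refine ⟨‖x₀‖⁻¹ • x₀, ?_, ?_⟩
      · rw [norm_smul, norm_inv, norm_norm, inv_mul_cancel₀ this]
      · rw [smul_smul, mul_inv_cancel₀ this, one_smul]
  obtain ⟨e, he, hxe⟩ := this
  have hx₀R : ‖x₀‖ < R := by simpa using hx₀
  have hx0n := norm_nonneg x₀
  have hnorm : ∀ s : ℝ, 0 ≤ s → ‖s • e‖ = s := by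
    intro s hs; rw [norm_smul, he, mul_one, Real.norm_of_nonneg hs]
  have hmem : ∀ s ∈ Icc 0 R, s • e ∈ closedBall (0 : EuclideanSpace ℝ (Fin n)) R := by
    intro s hs; rw [mem_closedBall_zero_iff, hnorm s hs.1]; exact hs.2
  obtain ⟨s, hs, hVs⟩ : ∃ s ∈ Icc ‖x₀‖ R, 0 < V (s • e) := by
    by_contra hcon
    push Not at hcon
    have hsub : (fun s : ℝ => s • e) '' Icc ‖x₀‖ R ⊆ {x ∈ closedBall 0 R | V x = 0} := by
      rintro _ ⟨s, hs, rfl⟩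
      have h1 := hmem s ⟨hx0n.trans hs.1, hs.2⟩
      exact ⟨h1, le_antisymm (hcon s hs) (hV0 _ h1)⟩
    have hpre : IsPreconnected ((fun s : ℝ => s • e) '' Icc ‖x₀‖ R) :=
      isPreconnected_Icc.image _ (by fun_prop)
    have hin : x₀ ∈ (fun s : ℝ => s • e) '' Icc ‖x₀‖ R := ⟨‖x₀‖, ⟨le_rfl, hx₀R.le⟩, hxe.symm⟩
    have h2 := hpre.subset_connectedComponentIn hin hsub
    have h3 : R • e ∈ connectedComponentIn {x ∈ closedBall 0 R | V x = 0} x₀ ∩ sphere 0 R :=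
      ⟨h2 ⟨R, ⟨hx₀R.le, le_rfl⟩, rfl⟩, by rw [mem_sphere_zero_iff_norm, hnorm R hR.le]⟩
    rw [hcomp] at h3
    exact h3
  have hslt : ‖x₀‖ < s := by
    rcases hs.1.eq_or_lt with h1 | h1
    · rw [← h1, ← hxe, hVx₀] at hVs; exact absurd hVs (lt_irrefl _)
    · exact h1
  have hcw : ContinuousWithinAt (fun s : ℝ => V (s • e)) (Icc 0 R) s :=
    (hVc.comp (f := fun s : ℝ => s • e) (by fun_prop) hmem) s ⟨hx0n.trans hs.1, hs.2⟩
  have hev := hcw.eventually (lt_mem_nhds (show V (s • e) / 2 < V (s • e) by linarith))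
  rw [eventually_iff, Metric.mem_nhdsWithin_iff] at hev
  obtain ⟨ε, hε, hsub⟩ := hev
  set η := min ε (s - ‖x₀‖) with hη
  have hη0 : 0 < η := lt_min hε (by linarith)
  have hη1 : η ≤ ε := min_le_left _ _
  have hη2 : η ≤ s - ‖x₀‖ := min_le_right _ _
  refine ⟨s - η / 2, s - η / 4, V (s • e) / 2, by linarith, by linarith, by linarith [hs.2],
    by linarith, ?_⟩
  intro x hx1 hx2
  have hxI : ‖x‖ ∈ Icc 0 R := ⟨norm_nonneg x, by linarith [hs.2]⟩
  have h1 : ‖x‖ ∈ ball s ε ∩ Icc 0 R := by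
    refine ⟨?_, hxI⟩
    rw [mem_ball, Real.dist_eq, abs_lt]; constructor <;> linarith
  have h2 : V (s • e) / 2 < V (‖x‖ • e) := hsub h1
  rw [hrad x (by simpa using hxI.2) (‖x‖ • e) (hmem _ hxI) (hnorm _ hxI.1).symm]
  exact h2.le

theorem pick_small {n : ℕ} {C K p q₁ β κ d T' : ℝ} (hC : 0 ≤ C) (hK : 0 < K) (hq₁ : 0 < q₁)
    (hβ : 0 < β) (hκ : κ = β / 4) (hd : 0 < d) (hT' : 0 < T') :
    ∃ τ ρ : ℝ, 0 < τ ∧ τ ≤ 1 ∧ τ ≤ T' ∧ 0 < ρ ∧ ρ ≤ d ∧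
      (4 * (2 * q₁ + 1) + 2 * (n : ℝ)) * (τ / ρ ^ 2) ≤ 1 / 16 ∧
      C * ρ ^ β * (2 * K ^ (p - 1)) ≤ 2 * q₁ / 32 * τ ^ κ := by
  have hKp : 0 < K ^ (p - 1) := Real.rpow_pos_of_pos hK _
  set ε := (2 * q₁ / 32) / (2 * C * K ^ (p - 1) + 1) with hε
  have hε0 : 0 < ε := by positivity
  set c := min d (ε ^ (1 / β)) with hc
  have hc0 : 0 < c := lt_min hd (Real.rpow_pos_of_pos hε0 _)
  have hcβ : c ^ β ≤ ε := by
    calc c ^ β ≤ (ε ^ (1 / β)) ^ β := Real.rpow_le_rpow hc0.le (min_le_right _ _) hβ.le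
      _ = ε := by rw [← Real.rpow_mul hε0.le, one_div_mul_cancel hβ.ne', Real.rpow_one]
  set N := 4 * (2 * q₁ + 1) + 2 * (n : ℝ) with hN
  have hN0 : 0 < N := by positivity
  set τ := min 1 (min T' ((c ^ 2 / (16 * N)) ^ 2)) with hτ
  have hτ0 : 0 < τ := lt_min one_pos (lt_min hT' (by positivity))
  have hτ1 : τ ≤ 1 := min_le_left _ _
  have hτ2 : τ ≤ T' := (min_le_right _ _).trans (min_le_left _ _)
  have hτ3 : τ ≤ (c ^ 2 / (16 * N)) ^ 2 := (min_le_right _ _).trans (min_le_right _ _)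
  have h4 : 0 < τ ^ (1 / 4 : ℝ) := Real.rpow_pos_of_pos hτ0 _
  refine ⟨τ, c * τ ^ (1 / 4 : ℝ), hτ0, hτ1, hτ2, by positivity, ?_, ?_, ?_⟩
  · have h5 : τ ^ (1 / 4 : ℝ) ≤ 1 := Real.rpow_le_one hτ0.le hτ1 (by norm_num)
    calc c * τ ^ (1 / 4 : ℝ) ≤ c * 1 := by gcongr
      _ ≤ d := by rw [mul_one]; exact min_le_left _ _
  · have h5 : (c * τ ^ (1 / 4 : ℝ)) ^ 2 = c ^ 2 * √τ := by
      rw [mul_pow, ← Real.rpow_natCast (τ ^ (1 / 4 : ℝ)), ← Real.rpow_mul hτ0.le, Real.sqrt_eq_rpow]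
      norm_num
    have h6 : √τ ≤ c ^ 2 / (16 * N) := Real.sqrt_le_iff.2 ⟨by positivity, hτ3⟩
    have h7 : 0 < √τ := Real.sqrt_pos.2 hτ0
    have h8 : τ / (c ^ 2 * √τ) = √τ / c ^ 2 := by
      nth_rewrite 1 [← Real.mul_self_sqrt hτ0.le]; field_simp
    rw [h5, h8]
    calc N * (√τ / c ^ 2) ≤ N * ((c ^ 2 / (16 * N)) / c ^ 2) := by gcongr
      _ = 1 / 16 := by field_simp
  · have h5 : (c * τ ^ (1 / 4 : ℝ)) ^ β = c ^ β * τ ^ κ := by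
      rw [Real.mul_rpow hc0.le h4.le, ← Real.rpow_mul hτ0.le, hκ]; congr 2; ring
    have h6 : 0 < τ ^ κ := Real.rpow_pos_of_pos hτ0 _
    have h7 : C * (2 * K ^ (p - 1)) * c ^ β ≤ 2 * q₁ / 32 := by
      calc C * (2 * K ^ (p - 1)) * c ^ β ≤ (2 * C * K ^ (p - 1) + 1) * ε := by
            have : C * (2 * K ^ (p - 1)) ≤ 2 * C * K ^ (p - 1) + 1 := by linarith
            gcongr
        _ = 2 * q₁ / 32 := by rw [hε]; field_simp
    rw [h5]
    calc C * (c ^ β * τ ^ κ) * (2 * K ^ (p - 1)) = C * (2 * K ^ (p - 1)) * c ^ β * τ ^ κ := by ring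
      _ ≤ 2 * q₁ / 32 * τ ^ κ := by gcongr



theorem stmt1
    (n : ℕ) (hn : 1 ≤ n) (R : ℝ) (hR : 0 < R)
    (Ω : Set (EuclideanSpace ℝ (Fin n)))
    (hΩ : Ω = ball (0 : EuclideanSpace ℝ (Fin n)) R)
    (p : ℝ) (hp : 1 < p)
    (f : ℝ → ℝ)
    (hf_nonneg : ∀ s ≥ (0:ℝ), 0 ≤ f s)
    (hf_C1 : ContDiffOn ℝ 1 f (Ici 0))
    (hf_C2 : ContDiffOn ℝ 2 f (Ici 0))
    (hf_conv : ConvexOn ℝ (Ici 0) f)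
    (hf_lim : Tendsto (fun s : ℝ => s ^ (-p) * f s) atTop (nhds 1))
    (hf_deriv : ∃ C₀ > 0, ∀ s ≥ (0:ℝ), |deriv f s| ≤ C₀ * (1 + s ^ (p - 1)))
    (V : EuclideanSpace ℝ (Fin n) → ℝ)
    (hV_nonneg : ∀ x ∈ closure Ω, 0 ≤ V x)
    (hV_holder : ∃ C β : ℝ, 0 < β ∧ β ≤ 1 ∧ 0 ≤ C ∧
      ∀ x ∈ closure Ω, ∀ y ∈ closure Ω, |V x - V y| ≤ C * ‖x - y‖ ^ β)
    (hV_rad : ∀ x ∈ closure Ω, ∀ y ∈ closure Ω, ‖x‖ = ‖y‖ → V x = V y)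
    (T : ℝ) (hT : 0 < T)
    (u : ℝ → EuclideanSpace ℝ (Fin n) → ℝ)
    (hu_nonneg : ∀ t ∈ Ioo 0 T, ∀ x ∈ Ω, 0 ≤ u t x)
    (hu_t : ∀ t ∈ Ioo 0 T, ∀ x ∈ Ω, DifferentiableAt ℝ (fun s => u s x) t)
    (hu_x : ∀ t ∈ Ioo 0 T, ∀ x ∈ Ω, ContDiffAt ℝ 2 (fun y => u t y) x)
    (heq : ∀ t ∈ Ioo 0 T, ∀ x ∈ Ω,
      deriv (fun s => u s x) t = lap (fun y => u t y) x + V x * f (u t x))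
    (hmono : ∀ t ∈ Ioo 0 T, ∀ x ∈ Ω, 0 ≤ deriv (fun s => u s x) t)
    (hu_rad : ∀ t ∈ Ioo 0 T, ∀ x ∈ Ω, ∀ y ∈ Ω, ‖x‖ = ‖y‖ → u t x = u t y)
    (x₀ : EuclideanSpace ℝ (Fin n)) (hx₀ : x₀ ∈ Ω) (hVx₀ : V x₀ = 0)
    (hcomp : connectedComponentIn {x ∈ closure Ω | V x = 0} x₀ ∩ frontier Ω = ∅)
    :
    ∃ r > 0, ∃ M > 0, ∀ t ∈ Ioo (T / 2) T, ∀ x ∈ Ω, ‖x - x₀‖ < r → u t x ≤ M := by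
  subst hΩ
  rw [closure_ball 0 hR.ne'] at hV_nonneg hV_holder hV_rad hcomp
  rw [frontier_ball 0 hR.ne'] at hcomp
  obtain ⟨C, β, hβ, hβ1, hC, hVH⟩ := hV_holder
  have h : Sol n R T f V u := ⟨hu_nonneg, hu_t, hu_x, heq, hmono⟩
  have hVc := holder_continuousOn hβ hVH
  have hx₀R : ‖x₀‖ < R := by simpa using hx₀
  have hV0 : ∀ x ∈ ball (0 : EuclideanSpace ℝ (Fin n)) R, 0 ≤ V x :=
    fun x hx => hV_nonneg x (ball_subset_closedBall hx)
  obtain ⟨Vm, hVm'⟩ := (isCompact_closedBall (0 : EuclideanSpace ℝ (Fin n)) R).exists_bound_of_continuousOn hVc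
  have hVm : ∀ x ∈ ball (0 : EuclideanSpace ℝ (Fin n)) R, V x ≤ Vm :=
    fun x hx => (le_abs_self _).trans (hVm' x (ball_subset_closedBall hx))
  have hThalf : T / 2 ∈ Ioo 0 T := ⟨by linarith, by linarith⟩
  by_cases hzero : ∀ t ∈ Ioo 0 T, ∀ x ∈ ball (0 : EuclideanSpace ℝ (Fin n)) R, deriv (fun s => u s x) t = 0
  · have hcont := (hu_x (T / 2) hThalf x₀ hx₀).continuousAt
    have hev := hcont.eventually (gt_mem_nhds (show u (T / 2) x₀ < |u (T / 2) x₀| + 1 by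
      linarith [le_abs_self (u (T / 2) x₀)]))
    obtain ⟨r, hr, hsub⟩ := Metric.eventually_nhds_iff.1 hev
    refine ⟨r, hr, |u (T / 2) x₀| + 1, by positivity, ?_⟩
    intro t ht x hx hxr
    have hconst : u t x = u (T / 2) x :=
      isOpen_Ioo.is_const_of_deriv_eq_zero (f := fun s => u s x) isPreconnected_Ioo
        (fun s hs => (hu_t s hs x hx).differentiableWithinAt) (fun s hs => hzero s hs x hx)
        ⟨by linarith [ht.1], ht.2⟩ hThalf
    rw [hconst]
    exact (hsub (by rwa [dist_eq_norm])).le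
  push Not at hzero
  obtain ⟨t₁, ht₁, x₁, hx₁, hne⟩ := hzero
  have hpos : 0 < deriv (fun s => u s x₁) t₁ := lt_of_le_of_ne (hmono t₁ ht₁ x₁ hx₁) hne.symm
  obtain ⟨rIn, r₁, c₀, hrIn, hr₁, hr₁R, hc₀, hVcol⟩ :=
    exists_collar hn hR hVc hV_nonneg hV_rad hx₀ hVx₀ hcomp
  have hrIn0 : 0 < rIn := (norm_nonneg x₀).trans_lt hrIn
  obtain ⟨y₁, r₀, c, h₀, hr₀, hc, hh₀, -, hsub, hstart⟩ :=
    h.start hf_C1.continuousOn (hVc.mono ball_subset_closedBall) ht₁ hx₁ hpos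
  obtain ⟨L0, hL0, hfL⟩ := convex_slope_ge hf_conv hf_C1
  obtain ⟨t₀, ht₀, c', hc', hlow⟩ := h.lower hL0 hV0 hVm hfL ht₁ hr₀ hc hsub hstart
    (hrIn0.trans hr₁) hr₁R (norm_add_lt_of_closedBall_subset hn hr₀ hsub)
  have ht₀' : t₀ ∈ Ioo 0 T := ⟨ht₁.1.trans ht₀.1, ht₀.2⟩
  set κ := β / 4 with hκ
  have hκ0 : 0 < κ := by positivity
  have hp1 : 0 < p - 1 := by linarith
  set q := 1 + (p - 1) / (1 + κ) with hq
  have hq1 : 1 < q := by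
    have : 0 < (p - 1) / (1 + κ) := by positivity
    linarith
  have hqp : q < p := by
    have : (p - 1) / (1 + κ) < p - 1 := div_lt_self hp1 (by linarith)
    linarith
  set q₁ := 1 / (q - 1) with hq₁
  have hq₁0 : 0 < q₁ := by
    have : 0 < q - 1 := by linarith
    positivity
  have hmp : 2 * q₁ * (p - 1) = 2 + 2 * κ := by
    rw [hq₁, hq, add_sub_cancel_left]; field_simp
  obtain ⟨δ, hδ, hsuper⟩ := h.superlinear hq1 hqp hf_conv hf_C1 hf_lim hf_deriv hV0 hVm hrIn0 hr₁
    hr₁R hc₀ hVcol ht₀' hc' hh₀ hlow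
  obtain ⟨S₀, hS₀, hfS⟩ := f_upper hf_lim
  set K := max S₀ (((q - 1) * δ) ^ (-q₁)) with hK
  have hK0 : 0 < K := lt_of_lt_of_le (by linarith) (le_max_left _ _)
  have hballIn : ∀ x : EuclideanSpace ℝ (Fin n), ‖x‖ ≤ rIn → x ∈ ball (0 : EuclideanSpace ℝ (Fin n)) R := by
    intro x hx; rw [mem_ball_zero_iff]; linarith
  have htype : ∀ t, t₀ ≤ t → t < T → ∀ x, ‖x‖ ≤ rIn → u t x ≤ K * (T - t) ^ (-q₁) := by
    intro t ht htT x hx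
    have h0 : ∀ s, t₀ ≤ s → s < T → s ∈ Ioo 0 T := fun s h1 h2 => ⟨ht₀'.1.trans_le h1, h2⟩
    have h1 := typeI_ode (v := fun s => u s x) hq1 hδ
      (fun s h1 h2 => hu_nonneg s (h0 s h1 h2) x (hballIn x hx))
      (fun s h1 h2 => hu_t s (h0 s h1 h2) x (hballIn x hx))
      (fun s h1 h2 => hsuper s h1 h2 x hx) ht htT
    refine h1.trans ?_
    have h2 : 0 ≤ (T - t) ^ (-q₁) := Real.rpow_nonneg (by linarith) _
    exact mul_le_mul_of_nonneg_right (le_max_right _ _) h2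
  obtain ⟨τ, ρ, hτ, hτ1, hτT, hρ, hρd, hsm, hCρ⟩ := pick_small (n := n) (C := C) (K := K) (p := p)
    (q₁ := q₁) (β := β) (κ := κ) (d := rIn - ‖x₀‖) (T' := T - t₀) hC hK0 hq₁0 hβ hκ (by linarith)
    (by linarith [ht₀.2])
  have hVC : ∀ x ∈ ball (0 : EuclideanSpace ℝ (Fin n)) R, V x ≤ C * ‖x - x₀‖ ^ β := by
    intro x hx
    have := hVH x (ball_subset_closedBall hx) x₀ (ball_subset_closedBall hx₀)
    rw [hVx₀, sub_zero] at this
    exact (le_abs_self _).trans this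
  have hfinal := h.compare hf_conv hV0 hVm hβ hC hVC hκ0 (by rw [hκ]; linarith) hq₁0 hmp hS₀ hfS
    (le_max_left _ _) ht₀' (hr₁.trans hr₁R) htype hτ hτ1 hτT hρ (by linarith) hsm hCρ
  have hsτ : 0 < √τ := Real.sqrt_pos.2 hτ
  refine ⟨ρ / 2, by positivity, K * (√τ / 4) ^ (-(2 * q₁)), by positivity, ?_⟩
  intro t ht x hx hxr
  have ht0 := ht₀'.1
  have hmax : max t (T - τ / 16) < T := max_lt ht.2 (by linarith)
  have ht' : t ∈ Ioo 0 T := ⟨by linarith [ht.1], ht.2⟩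
  have hm1 := le_max_left t (T - τ / 16)
  exact (h.monotoneOn hx ht' ⟨by linarith [ht'.1], hmax⟩ hm1).trans
    (hfinal _ x (le_max_right _ _) hmax hxr.le)
end

section
/- Let p > 1, let r, T, A > 0, let x₀ ∈ ℝⁿ, and let u be a positive classical solution of the differential inequality u_t − Δu ≤ A·u^p on (0,T)×B(x₀,r). Assume that for each ε > 0 there exists a constant C_ε > 0 such that Δu(t,x) ≤ ε(T−t)^{−α−1} + C_ε for all (t,x) ∈ (T/2,T)×B(x₀,r). Then for any k ∈ (0,κ) there exists τ₀ > 0 with the following property: for every t₀ ∈ [max(T−τ₀,0), T) such that (T−t₀)^α u(t₀,x) ≤ k·A^{−α} for all x ∈ B(x₀,r), there exists a constant K > 0 such that u(t,x) ≤ K for all (t,x) ∈ [t₀,T)×B(x₀,r/4). -/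
open Set Metric Filter

open scoped Topology

lemma second_deriv_nonpos (h h' : ℝ → ℝ) (d a : ℝ)
    (hd : ∀ᶠ s in 𝓝 a, HasDerivAt h (h' s) s) (hd2 : HasDerivAt h' d a)
    (hmax : IsLocalMax h a) : d ≤ 0 := by
  by_contra hcon
  push Not at hcon
  have e1 : deriv h =ᶠ[𝓝 a] h' := hd.mono fun s hs => hs.deriv
  have e2 : deriv (deriv h) a = d := by rw [e1.deriv_eq]; exact hd2.deriv
  have hmin : IsLocalMin h a := isLocalMin_of_deriv_deriv_pos (by rw [e2]; exact hcon)
    hmax.deriv_eq_zero hd.self_of_nhds.continuousAt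
  have hc : h =ᶠ[𝓝 a] fun _ => h a := by
    filter_upwards [hmin, hmax] with s h1 h2
    exact le_antisymm h2 h1
  have h0 : h' =ᶠ[𝓝 a] fun _ => 0 := by
    filter_upwards [hc.eventuallyEq_nhds, hd] with s h1 h2
    rw [← h2.deriv, h1.deriv_eq]; simp
  have : d = 0 := by
    rw [← hd2.deriv, h0.deriv_eq]; simp
  linarith

lemma lap_le_of_max {n : ℕ} (g : EuclideanSpace ℝ (Fin n) → ℝ)
    (x x₀ : EuclideanSpace ℝ (Fin n)) (hg : ContDiffAt ℝ 2 g x) (F F' : ℝ → ℝ) (F'' : ℝ)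
    (hF : ∀ q, HasDerivAt F (F' q) q) (hF' : HasDerivAt F' F'' (‖x - x₀‖ ^ 2))
    (hmax : IsLocalMax (fun y => g y - F (‖y - x₀‖ ^ 2)) x) :
    lap g x ≤ 4 * F'' * ‖x - x₀‖ ^ 2 + 2 * n * F' (‖x - x₀‖ ^ 2) := by
  have key : ∀ i : Fin n, fderiv ℝ (fun y => fderiv ℝ g y (EuclideanSpace.single i 1)) x
      (EuclideanSpace.single i 1) ≤ 4 * F'' * (x - x₀) i ^ 2 + 2 * F' (‖x - x₀‖ ^ 2) := by
    intro i
    set e : EuclideanSpace ℝ (Fin n) := EuclideanSpace.single i 1 with he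
    set y := x - x₀ with hy
    have hq : ∀ s : ℝ, ‖x + s • e - x₀‖ ^ 2 = ‖y‖ ^ 2 + 2 * s * y i + s ^ 2 := by
      intro s
      have : x + s • e - x₀ = y + s • e := by rw [hy]; abel
      rw [this, norm_add_sq_real, inner_smul_right, norm_smul]
      simp [he, EuclideanSpace.inner_single_right]
      ring
    have hl : ∀ s : ℝ, HasDerivAt (fun s : ℝ => x + s • e) e s := by
      intro s
      simpa using ((hasDerivAt_id s).smul_const e).const_add x
    have hl0 : Tendsto (fun s : ℝ => x + s • e) (𝓝 0) (𝓝 x) := by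
      have := (hl 0).continuousAt.tendsto
      simpa using this
    have hqd : ∀ s : ℝ, HasDerivAt (fun s : ℝ => ‖y‖ ^ 2 + 2 * s * y i + s ^ 2) (2 * y i + 2 * s) s := by
      intro s
      have h1 := ((((hasDerivAt_id s).const_mul 2).mul_const (y i)).const_add (‖y‖^2)).add
        ((hasDerivAt_id s).pow 2)
      refine HasDerivAt.congr_deriv h1 ?_
      simp
    have hgd : ∀ᶠ z in 𝓝 x, DifferentiableAt ℝ g z := by
      have := hg.eventually (by simp)
      filter_upwards [this] with z hz using hz.differentiableAt (by simp)
    have hfd : DifferentiableAt ℝ (fderiv ℝ g) x :=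
      (hg.fderiv_right (m := 1) (by norm_num)).differentiableAt (by simp)
    have hfd2 : DifferentiableAt ℝ (fun z => fderiv ℝ g z e) x := hfd.clm_apply (by fun_prop)
    have hx0 : x + (0:ℝ) • e = x := by simp
    have hres := second_deriv_nonpos
      (fun s => g (x + s • e) - F (‖y‖ ^ 2 + 2 * s * y i + s ^ 2))
      (fun s => fderiv ℝ g (x + s • e) e
        - F' (‖y‖ ^ 2 + 2 * s * y i + s ^ 2) * (2 * y i + 2 * s))
      (fderiv ℝ (fun z => fderiv ℝ g z e) x e
        - (F'' * (2 * y i) * (2 * y i) + F' (‖y‖ ^ 2) * 2)) 0 ?_ ?_ ?_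
    · nlinarith
    · filter_upwards [hl0.eventually hgd] with s hs
      exact (hs.hasFDerivAt.comp_hasDerivAt s (hl s)).sub ((hF _).comp s (hqd s))
    · have a1 : HasDerivAt (fun s : ℝ => fderiv ℝ g (x + s • e) e)
          (fderiv ℝ (fun z => fderiv ℝ g z e) x e) 0 := by
        have : HasFDerivAt (fun z => fderiv ℝ g z e) (fderiv ℝ (fun z => fderiv ℝ g z e) x)
          (x + (0:ℝ) • e) := by rw [hx0]; exact hfd2.hasFDerivAt
        exact this.comp_hasDerivAt (0:ℝ) (hl 0)
      have a2 : HasDerivAt (fun s : ℝ => F' (‖y‖ ^ 2 + 2 * s * y i + s ^ 2)) (F'' * (2 * y i)) 0 := by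
        have h3 : HasDerivAt F' F'' (‖y‖ ^ 2 + 2 * (0:ℝ) * y i + (0:ℝ) ^ 2) := by simpa using hF'
        have := HasDerivAt.comp (0:ℝ) h3 (hqd 0)
        simpa [Function.comp_def] using this
      have a3 : HasDerivAt (fun s : ℝ => 2 * y i + 2 * s) 2 0 := by
        simpa using ((hasDerivAt_id (0:ℝ)).const_mul 2).const_add (2 * y i)
      have := a1.sub (a2.mul a3)
      refine HasDerivAt.congr_deriv this ?_
      simp
    · have : Tendsto (fun s : ℝ => x + s • e) (𝓝 0) (𝓝 x) := hl0
      have h4 := this.eventually hmax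
      filter_upwards [h4] with s hs
      have hs' := hs
      rw [hq s] at hs'
      simpa using hs'
  unfold lap
  calc _ ≤ ∑ i : Fin n, (4 * F'' * (x - x₀) i ^ 2 + 2 * F' (‖x - x₀‖ ^ 2)) :=
        Finset.sum_le_sum fun i _ => key i
    _ = _ := by
        rw [Finset.sum_add_distrib, ← Finset.mul_sum, EuclideanSpace.norm_sq_eq]
        simp
        ring

lemma W_deriv (α M c a b : ℝ) (hc : 0 ≤ c) (ha : 0 < a) (q : ℝ) :
    HasDerivAt (fun q => M * (a + c * (b - q) ^ 2) ^ (-α))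
      (2 * c * α * M * (b - q) * (a + c * (b - q) ^ 2) ^ (-α - 1)) q := by
  have hS : 0 < a + c * (b - q) ^ 2 := by positivity
  have h1 : HasDerivAt (fun q => a + c * (b - q) ^ 2) (-(2 * c * (b - q))) q := by
    have := ((((hasDerivAt_id q).const_sub b).pow 2).const_mul c).const_add a
    refine HasDerivAt.congr_deriv this ?_
    simp; ring
  have := (h1.rpow_const (p := -α) (Or.inl hS.ne')).const_mul M
  refine HasDerivAt.congr_deriv this ?_
  ring

lemma W_deriv2 (α M c a b : ℝ) (hc : 0 ≤ c) (ha : 0 < a) (q : ℝ) :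
    HasDerivAt (fun q => 2 * c * α * M * (b - q) * (a + c * (b - q) ^ 2) ^ (-α - 1))
      (4 * c ^ 2 * α * (α + 1) * M * (b - q) ^ 2 * (a + c * (b - q) ^ 2) ^ (-α - 2)
        - 2 * c * α * M * (a + c * (b - q) ^ 2) ^ (-α - 1)) q := by
  have h1 := W_deriv (α + 1) 1 c a b hc ha q
  have h2 : HasDerivAt (fun q => 2 * c * α * M * (b - q)) (2 * c * α * M * (-1)) q :=
    ((hasDerivAt_id q).const_sub b).const_mul _
  have := h2.mul h1
  have e1 : -(α + 1) = -α - 1 := by ring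
  have e2 : -α - 1 - 1 = -α - 2 := by ring
  simp only [one_mul, e1, e2] at this
  refine HasDerivAt.congr_deriv this ?_
  ring
  
lemma W_lap (α M c a b q N : ℝ) (hα : 0 < α) (hM : 0 < M) (hc : 0 ≤ c) (ha : 0 < a)
    (hq0 : 0 ≤ q) (hqb : q ≤ b) (hN : 0 ≤ N) :
    4 * (4 * c ^ 2 * α * (α + 1) * M * (b - q) ^ 2 * (a + c * (b - q) ^ 2) ^ (-α - 2)
        - 2 * c * α * M * (a + c * (b - q) ^ 2) ^ (-α - 1)) * q
      + 2 * N * (2 * c * α * M * (b - q) * (a + c * (b - q) ^ 2) ^ (-α - 1))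
    ≤ α * M * (a + c * (b - q) ^ 2) ^ (-α - 1) * (c * ((16 * (α + 1) + 4 * N) * b)) := by
  set S := a + c * (b - q) ^ 2 with hSd
  have hS : 0 < S := by positivity
  have e : S ^ (-α - 1) = S ^ (-α - 2) * S := by
    conv_rhs => rw [← Real.rpow_add_one hS.ne']
    congr 1; ring
  have hR := Real.rpow_pos_of_pos hS (-α - 1)
  set P := S ^ (-α - 2) with hP
  have hPp : 0 < P := Real.rpow_pos_of_pos hS _
  set R := S ^ (-α - 1) with hRd
  have i1 : c * (b - q) ^ 2 * P ≤ R := by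
    rw [e]; nlinarith
  have i2 : c * α * (α + 1) * M * q * (c * (b - q) ^ 2 * P) ≤ c * α * (α + 1) * M * q * R :=
    mul_le_mul_of_nonneg_left i1 (by positivity)
  have i3 : c * α * (α + 1) * M * R * q ≤ c * α * (α + 1) * M * R * b :=
    mul_le_mul_of_nonneg_left hqb (by positivity)
  have i4 : 0 ≤ c * α * M * R * q := by positivity
  have i5 : N * (c * α * M * R) * (b - q) ≤ N * (c * α * M * R) * b :=
    mul_le_mul_of_nonneg_left (by linarith) (by positivity)
  nlinarith

lemma time_deriv (α m T t φ : ℝ) (h : 0 < T - t + φ) :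
    HasDerivAt (fun s => m * (T - s + φ) ^ (-α)) (α * m * (T - t + φ) ^ (-α - 1)) t := by
  have h1 : HasDerivAt (fun s => T - s + φ) (-1) t :=
    ((hasDerivAt_id t).const_sub T).add_const φ
  have := (h1.rpow_const (p := -α) (Or.inl h.ne')).const_mul m
  refine HasDerivAt.congr_deriv this ?_
  ring

lemma left_deriv_nonneg (f : ℝ → ℝ) (d a b : ℝ) (hab : a < b) (hd : HasDerivAt f d b)
    (h0 : ∀ s ∈ Ico a b, f s ≤ f b) : 0 ≤ d := by
  have h1 := hd.hasDerivWithinAt (s := Iio b)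
  have h2 := (hasDerivWithinAt_iff_tendsto_slope' (by simp)).1 h1
  refine ge_of_tendsto h2 ?_
  filter_upwards [Ico_mem_nhdsLT hab] with s hs
  rw [slope_def_field]
  exact div_nonneg_of_nonpos (by linarith [h0 s hs]) (by linarith [hs.2])

/-- comparison with the supersolution -/
lemma comparison (n : ℕ) (p α : ℝ) (hα : 0 < α) (hpα : α * p = α + 1)
    (r T A M c ρ t₀ : ℝ) (hρ : 0 < ρ) (hρr : ρ < r) (hA : 0 < A) (hM : 0 < M) (hc : 0 < c)
    (x₀ : EuclideanSpace ℝ (Fin n))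
    (u : ℝ → EuclideanSpace ℝ (Fin n) → ℝ)
    (hu_t : ∀ t ∈ Ico t₀ T, ∀ x ∈ ball x₀ r, DifferentiableAt ℝ (fun s => u s x) t)
    (hu_x : ∀ t ∈ Ico t₀ T, ∀ x ∈ ball x₀ r, ContDiffAt ℝ 2 (fun y => u t y) x)
    (hineq : ∀ t ∈ Ico t₀ T, ∀ x ∈ ball x₀ r,
      deriv (fun s => u s x) t - lap (fun y => u t y) x ≤ A * u t x ^ p)
    (hLip : ∀ T' < T, ∃ L : ℝ, ∀ t ∈ Icc t₀ T', ∀ x ∈ ball x₀ r, deriv (fun s => u s x) t ≤ L)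
    (hbd : ∀ t ∈ Ico t₀ T, ∀ x ∈ ball x₀ r, u t x < M * (T - t) ^ (-α))
    (hinit : ∀ x ∈ closedBall x₀ ρ,
      u t₀ x < M * (T - t₀ + c * (ρ ^ 2 - ‖x - x₀‖ ^ 2) ^ 2) ^ (-α))
    (hcM : A * M ^ p < α * M * (1 - c * ((16 * (α + 1) + 4 * n) * ρ ^ 2))) :
    ∀ t ∈ Ico t₀ T, ∀ x ∈ closedBall x₀ ρ,
      u t x < M * (T - t + c * (ρ ^ 2 - ‖x - x₀‖ ^ 2) ^ 2) ^ (-α) := by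
  by_contra hcon
  push Not at hcon
  obtain ⟨t₁, ht₁, x₁, hx₁, hux₁⟩ := hcon
  have hsub : closedBall x₀ ρ ⊆ ball x₀ r := closedBall_subset_ball hρr
  set W : ℝ → EuclideanSpace ℝ (Fin n) → ℝ :=
    fun t x => M * (T - t + c * (ρ ^ 2 - ‖x - x₀‖ ^ 2) ^ 2) ^ (-α) with hW
  have hSpos : ∀ t < T, ∀ x : EuclideanSpace ℝ (Fin n),
      0 < T - t + c * (ρ ^ 2 - ‖x - x₀‖ ^ 2) ^ 2 := by
    intro t ht x
    have : 0 < T - t := by linarith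
    positivity
  set B : Set ℝ := {t | t ∈ Ico t₀ T ∧ ∃ x ∈ closedBall x₀ ρ, W t x ≤ u t x} with hB
  have hBne : B.Nonempty := ⟨t₁, ht₁, x₁, hx₁, hux₁⟩
  have hBbd : BddBelow B := ⟨t₀, fun t ht => ht.1.1⟩
  set ts := sInf B with hts
  have hts0 : t₀ ≤ ts := le_csInf hBne fun t ht => ht.1.1
  have htsT : ts < T := lt_of_le_of_lt (csInf_le hBbd ⟨ht₁, x₁, hx₁, hux₁⟩) ht₁.2
  have htsm : ts ∈ Ico t₀ T := ⟨hts0, htsT⟩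
  have hbefore : ∀ t ∈ Ico t₀ ts, ∀ x ∈ closedBall x₀ ρ, u t x < W t x := by
    intro t ht x hx
    by_contra h
    push Not at h
    have : ts ≤ t := csInf_le hBbd ⟨⟨ht.1, ht.2.trans htsT⟩, x, hx, h⟩
    linarith [ht.2]
  -- the infimum is attained
  have hbad : ∃ x ∈ closedBall x₀ ρ, W ts x ≤ u ts x := by
    by_contra hgood
    push Not at hgood
    have hcont : ContinuousOn (fun x => W ts x - u ts x) (closedBall x₀ ρ) := by
      intro x hx
      have h1 : ContinuousAt (fun y => u ts y) x := (hu_x ts htsm x (hsub hx)).continuousAt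
      have h2 : ContinuousAt (fun y => W ts y) x := by
        refine continuousAt_const.mul (ContinuousAt.rpow_const ?_ (Or.inl (hSpos ts htsT x).ne'))
        fun_prop
      exact (h2.sub h1).continuousWithinAt
    obtain ⟨xm, hxm, hmin⟩ := (isCompact_closedBall x₀ ρ).exists_isMinOn
      ⟨x₀, by simp [hρ.le]⟩ hcont
    have hm : 0 < W ts xm - u ts xm := by linarith [hgood xm hxm]
    set m := W ts xm - u ts xm with hmdef
    set T' := (ts + T) / 2 with hT'
    obtain ⟨L, hL⟩ := hLip T' (by rw [hT']; linarith)
    have hL1 : 0 < |L| + 1 := by positivity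
    set δ := min (T' - ts) (m / (|L| + 1)) with hδ
    have hδpos : 0 < δ := lt_min (by rw [hT']; linarith) (by positivity)
    obtain ⟨t, htB, htlt⟩ := exists_lt_of_csInf_lt hBne (show sInf B < ts + δ by rw [← hts]; linarith)
    have htts : ts ≤ t := csInf_le hBbd htB
    obtain ⟨htm, x, hx, hxW⟩ := htB
    have htT' : t ≤ T' := by
      have := min_le_left (T' - ts) (m / (|L| + 1)); linarith
    have htm' : (t - ts) * (|L| + 1) < m := by
      have := min_le_right (T' - ts) (m / (|L| + 1))
      rw [← lt_div_iff₀ hL1]; linarith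
    have hgrow : u t x - u ts x ≤ L * (t - ts) := by
      have hdiff : ∀ s ∈ Icc ts t, DifferentiableAt ℝ (fun s => u s x) s := fun s hs =>
        hu_t s ⟨hts0.trans hs.1, lt_of_le_of_lt hs.2 htm.2⟩ x (hsub hx)
      refine Convex.image_sub_le_mul_sub_of_deriv_le (convex_Icc ts t)
        (f := fun s => u s x) (C := L) (fun s hs => (hdiff s hs).continuousAt.continuousWithinAt)
        (fun s hs => (hdiff s (interior_subset hs)).differentiableWithinAt) ?_ ts
        (left_mem_Icc.2 htts) t (right_mem_Icc.2 htts) htts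
      intro s hs
      have hs' := interior_subset hs
      exact hL s ⟨hts0.trans hs'.1, hs'.2.trans htT'⟩ x (hsub hx)
    have hWmono : W ts x ≤ W t x := by
      refine mul_le_mul_of_nonneg_left ?_ hM.le
      exact Real.rpow_le_rpow_of_nonpos (hSpos t htm.2 x) (by linarith) (by linarith)
    have hmx : m ≤ W ts x - u ts x := hmin hx
    have : L * (t - ts) ≤ (t - ts) * (|L| + 1) := by
      nlinarith [le_abs_self L]
    linarith
  obtain ⟨xs, hxs, hxsW⟩ := hbad
  have hts0' : t₀ < ts := by
    rcases hts0.lt_or_eq with h | h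
    · exact h
    · exfalso
      have h1 := hinit xs hxs
      rw [h] at h1
      exact absurd h1 (not_lt.2 hxsW)
  have hWt : ∀ x, HasDerivAt (fun s => W s x)
      (α * M * (T - ts + c * (ρ ^ 2 - ‖x - x₀‖ ^ 2) ^ 2) ^ (-α - 1)) ts := fun x =>
    time_deriv α M T ts _ (hSpos ts htsT x)
  have hle : ∀ x ∈ closedBall x₀ ρ, u ts x ≤ W ts x := by
    intro x hx
    have h1 : Tendsto (fun s => u s x) (𝓝[<] ts) (𝓝 (u ts x)) :=
      (hu_t ts htsm x (hsub hx)).continuousAt.continuousWithinAt.tendsto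
    have h2 : Tendsto (fun s => W s x) (𝓝[<] ts) (𝓝 (W ts x)) :=
      (hWt x).continuousAt.continuousWithinAt.tendsto
    refine le_of_tendsto_of_tendsto h1 h2 ?_
    filter_upwards [Ico_mem_nhdsLT hts0'] with s hs using (hbefore s hs x hx).le
  have heq : u ts xs = W ts xs := le_antisymm (hle xs hxs) hxsW
  have hxsr := hsub hxs
  -- interior
  have hxint : xs ∈ ball x₀ ρ := by
    rw [mem_ball]
    rcases (mem_closedBall.1 hxs).lt_or_eq with h | h
    · exact h
    · exfalso
      have h1 := hbd ts htsm xs hxsr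
      rw [heq] at h1
      simp only [hW] at h1
      rw [← dist_eq_norm, h] at h1
      simp at h1
  have htime : α * M * (T - ts + c * (ρ ^ 2 - ‖xs - x₀‖ ^ 2) ^ 2) ^ (-α - 1) ≤
      deriv (fun s => u s xs) ts := by
    have h1 := left_deriv_nonneg (fun s => u s xs - W s xs) _ t₀ ts hts0'
      ((hu_t ts htsm xs hxsr).hasDerivAt.sub (hWt xs)) (by
        intro s hs
        have := hbefore s hs xs hxs
        simp only [heq]; linarith)
    linarith
  have hTts : 0 < T - ts := by linarith
  have hlap := lap_le_of_max (fun y => u ts y) xs x₀ (hu_x ts htsm xs hxsr) _ _ _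
    (W_deriv α M c (T - ts) (ρ ^ 2) hc.le hTts)
    (W_deriv2 α M c (T - ts) (ρ ^ 2) hc.le hTts _) (by
      filter_upwards [isOpen_ball.mem_nhds hxint] with y hy
      have h1 := hle y (ball_subset_closedBall hy)
      simp only [hW] at h1 heq
      simp only [heq]
      linarith)
  have hq : ‖xs - x₀‖ ^ 2 ≤ ρ ^ 2 := by
    rw [← dist_eq_norm]
    exact pow_le_pow_left₀ dist_nonneg (mem_closedBall.1 hxs) 2
  have hlap2 := hlap.trans (W_lap α M c (T - ts) (ρ ^ 2) (‖xs - x₀‖ ^ 2) n hα hM hc.le hTts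
    (by positivity) hq (by positivity))
  have hin := hineq ts htsm xs hxsr
  have hS := hSpos ts htsT xs
  rw [heq] at hin
  simp only [hW] at hin
  set S := T - ts + c * (ρ ^ 2 - ‖xs - x₀‖ ^ 2) ^ 2 with hSd
  have hpw : (M * S ^ (-α)) ^ p = M ^ p * S ^ (-α - 1) := by
    rw [Real.mul_rpow hM.le (Real.rpow_nonneg hS.le _), ← Real.rpow_mul hS.le]
    congr 2; linarith
  rw [hpw] at hin
  have hR : 0 < S ^ (-α - 1) := Real.rpow_pos_of_pos hS _
  have := mul_lt_mul_of_pos_right hcM hR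
  nlinarith

theorem stmt7
    (n : ℕ) (p : ℝ) (hp : 1 < p)
    (r T A : ℝ) (hr : 0 < r) (hT : 0 < T) (hA : 0 < A)
    (x₀ : EuclideanSpace ℝ (Fin n))
    (u : ℝ → EuclideanSpace ℝ (Fin n) → ℝ)
    (hu_pos : ∀ t ∈ Ioo 0 T, ∀ x ∈ ball x₀ r, 0 < u t x)
    (hu_t : ∀ t ∈ Ioo 0 T, ∀ x ∈ ball x₀ r, DifferentiableAt ℝ (fun s => u s x) t)
    (hu_x : ∀ t ∈ Ioo 0 T, ∀ x ∈ ball x₀ r, ContDiffAt ℝ 2 (fun y => u t y) x)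
    (hineq : ∀ t ∈ Ioo 0 T, ∀ x ∈ ball x₀ r,
      deriv (fun s => u s x) t - lap (fun y => u t y) x ≤ A * u t x ^ p)
    (hΔbound : ∀ ε > 0, ∃ C > 0, ∀ t ∈ Ioo (T / 2) T, ∀ x ∈ ball x₀ r,
      lap (fun y => u t y) x ≤ ε * (T - t) ^ (-(1 / (p - 1)) - 1) + C)
    :
    ∀ k ∈ Ioo 0 ((1 / (p - 1)) ^ (1 / (p - 1)) : ℝ), ∃ τ₀ > 0, ∀ t₀ : ℝ,
      max (T - τ₀) 0 ≤ t₀ → t₀ < T →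
      (∀ x ∈ ball x₀ r, (T - t₀) ^ (1 / (p - 1)) * u t₀ x ≤ k * A ^ (-(1 / (p - 1)))) →
      ∃ K > 0, ∀ t ∈ Ico t₀ T, ∀ x ∈ ball x₀ (r / 4), u t x ≤ K := by
  have hp1 : 0 < p - 1 := by linarith
  have hα : 0 < 1 / (p - 1) := by positivity
  have hpα : 1 / (p - 1) * p = 1 / (p - 1) + 1 := by field_simp; ring
  have hα1 : 1 / (p - 1) * (p - 1) = 1 := by field_simp
  generalize 1 / (p - 1) = α at *
  intro k hk
  -- A (k A^{-α})^p < α k A^{-α}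
  have hsuper : ∀ j ∈ Ioo 0 (α ^ α), A * (j * A ^ (-α)) ^ p < α * (j * A ^ (-α)) := by
    intro j hj
    have hj1 : j ^ (p - 1) < α := by
      have := Real.rpow_lt_rpow hj.1.le hj.2 hp1
      rwa [← Real.rpow_mul hα.le, hα1, Real.rpow_one] at this
    have hAα : 0 < A ^ (-α) := Real.rpow_pos_of_pos hA _
    have e1 : j ^ p = j ^ (p - 1) * j := by
      rw [← Real.rpow_add_one hj.1.ne']; congr 1; ring
    have e2 : A * (A ^ (-α)) ^ p = A ^ (-α) := by
      rw [← Real.rpow_mul hA.le]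
      have : -α * p = -α - 1 := by linarith
      rw [this, Real.rpow_sub_one hA.ne']
      field_simp
    rw [Real.mul_rpow hj.1.le hAα.le, e1]
    calc A * (j ^ (p - 1) * j * (A ^ (-α)) ^ p)
        = j ^ (p - 1) * (j * (A * (A ^ (-α)) ^ p)) := by ring
      _ = j ^ (p - 1) * (j * A ^ (-α)) := by rw [e2]
      _ < _ := mul_lt_mul_of_pos_right hj1 (mul_pos hj.1 hAα)
  have hAα : 0 < A ^ (-α) := Real.rpow_pos_of_pos hA _
  set m := k * A ^ (-α) with hm
  have hmpos : 0 < m := mul_pos hk.1 hAα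
  set D := α * m - A * m ^ p with hD
  have hDpos : 0 < D := by have := hsuper k hk; rw [hD]; linarith
  obtain ⟨C, hC, hlapb⟩ := hΔbound (D / 2) (by linarith)
  refine ⟨min (min (T / 4) 1) (D / (4 * C)), lt_min (lt_min (by linarith) one_pos) (by positivity), ?_⟩
  intro t₀ ht₀ ht₀T hinit
  have hτ : T - t₀ ≤ min (min (T / 4) 1) (D / (4 * C)) := by
    have := (le_max_left _ _).trans ht₀; linarith
  have hτ1 : T - t₀ ≤ T / 4 := hτ.trans ((min_le_left _ _).trans (min_le_left _ _))
  have hτ2 : T - t₀ ≤ 1 := hτ.trans ((min_le_left _ _).trans (min_le_right _ _))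
  have hτ3 : T - t₀ ≤ D / (4 * C) := hτ.trans (min_le_right _ _)
  have hI : ∀ t ∈ Ico t₀ T, t ∈ Ioo 0 T := fun t ht => ⟨by linarith [ht.1], ht.2⟩
  have hI2 : ∀ t ∈ Ico t₀ T, t ∈ Ioo (T / 2) T := fun t ht => ⟨by linarith [ht.1], ht.2⟩
  -- growth bound whenever below the barrier
  have hgrow : ∀ t ∈ Ico t₀ T, ∀ x ∈ ball x₀ r, u t x ≤ m * (T - t) ^ (-α) →
      deriv (fun s => u s x) t < α * m * (T - t) ^ (-α - 1) := by
    intro t ht x hx hle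
    have hτp : 0 < T - t := by linarith [ht.2]
    have hR : 0 < (T - t) ^ (-α - 1) := Real.rpow_pos_of_pos hτp _
    have h1 := hineq t (hI t ht) x hx
    have h2 := hlapb t (hI2 t ht) x hx
    have h3 : u t x ^ p ≤ m ^ p * (T - t) ^ (-α - 1) := by
      have := Real.rpow_le_rpow (hu_pos t (hI t ht) x hx).le hle (by linarith : 0 ≤ p)
      rw [Real.mul_rpow hmpos.le (Real.rpow_nonneg hτp.le _), ← Real.rpow_mul hτp.le] at this
      have e : -α * p = -α - 1 := by linarith
      rwa [e] at this
    have h4 : C < D / 2 * (T - t) ^ (-α - 1) := by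
      have h5 : (T - t) ^ (-1 : ℝ) ≤ (T - t) ^ (-α - 1) :=
        Real.rpow_le_rpow_of_exponent_ge hτp (by linarith [ht.1]) (by linarith)
      rw [Real.rpow_neg_one] at h5
      have h6 : T - t ≤ D / (4 * C) := by linarith [ht.1]
      rw [le_div_iff₀ (by positivity)] at h6
      have h7 : 4 * C ≤ D * (T - t)⁻¹ := by
        rw [← div_eq_mul_inv, le_div_iff₀ hτp]; linarith
      nlinarith
    have h8 := mul_le_mul_of_nonneg_left h3 hA.le
    rw [hD] at h4 h2
    nlinarith
  -- step 1: barrier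
  have hbar : ∀ t ∈ Ico t₀ T, ∀ x ∈ ball x₀ r, u t x ≤ m * (T - t) ^ (-α) := by
    intro t ht x hx
    have hB : ∀ s ∈ Icc t₀ t, HasDerivAt (fun s => m * (T - s) ^ (-α))
        (α * m * (T - s) ^ (-α - 1)) s := by
      intro s hs
      have := time_deriv α m T s 0 (by linarith [hs.2, ht.2])
      simpa only [add_zero] using this
    have hIcc : ∀ s ∈ Icc t₀ t, s ∈ Ico t₀ T := fun s hs => ⟨hs.1, lt_of_le_of_lt hs.2 ht.2⟩
    have hd : ∀ s ∈ Icc t₀ t, HasDerivAt (fun s => u s x) (deriv (fun s => u s x) s) s :=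
      fun s hs => (hu_t s (hI s (hIcc s hs)) x hx).hasDerivAt
    refine image_le_of_deriv_right_lt_deriv_boundary' (f := fun s => u s x)
      (f' := fun s => deriv (fun s => u s x) s) (a := t₀) (b := t)
      (B := fun s => m * (T - s) ^ (-α)) (B' := fun s => α * m * (T - s) ^ (-α - 1))
      (fun s hs => (hd s hs).continuousAt.continuousWithinAt)
      (fun s hs => (hd s (Ico_subset_Icc_self hs)).hasDerivWithinAt) ?_
      (fun s hs => (hB s hs).continuousAt.continuousWithinAt)
      (fun s hs => (hB s (Ico_subset_Icc_self hs)).hasDerivWithinAt) ?_ (right_mem_Icc.2 ht.1)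
    · have h1 := hinit x hx
      have hτp : 0 < T - t₀ := by linarith
      have h2 : 0 < (T - t₀) ^ α := Real.rpow_pos_of_pos hτp _
      change u t₀ x ≤ m * (T - t₀) ^ (-α)
      rw [Real.rpow_neg hτp.le, ← div_eq_mul_inv, le_div_iff₀ h2]
      linarith
    · intro s hs he
      exact hgrow s (hIcc s (Ico_subset_Icc_self hs)) x hx (le_of_eq he)
  -- step 2
  set j := (k + α ^ α) / 2 with hj
  have hkj : k < j := by rw [hj]; linarith [hk.2]
  have hjI : j ∈ Ioo 0 (α ^ α) := ⟨hk.1.trans hkj, by rw [hj]; linarith [hk.2]⟩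
  set M := j * A ^ (-α) with hMdef
  have hM : 0 < M := mul_pos hjI.1 hAα
  have hmM : m < M := mul_lt_mul_of_pos_right hkj hAα
  have hτp : 0 < T - t₀ := by linarith
  set ρ := r / 2 with hρ
  have hρpos : 0 < ρ := by rw [hρ]; linarith
  have hc1 : ∀ᶠ c in 𝓝[>] (0:ℝ),
      A * M ^ p < α * M * (1 - c * ((16 * (α + 1) + 4 * n) * ρ ^ 2)) := by
    have : ContinuousAt (fun c : ℝ => α * M * (1 - c * ((16 * (α + 1) + 4 * n) * ρ ^ 2))) 0 := by
      fun_prop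
    refine (this.eventually_const_lt ?_).filter_mono nhdsWithin_le_nhds
    simpa using hsuper j hjI
  have hc2 : ∀ᶠ c in 𝓝[>] (0:ℝ),
      m * (T - t₀) ^ (-α) < M * (T - t₀ + c * (ρ ^ 2) ^ 2) ^ (-α) := by
    have : ContinuousAt (fun c : ℝ => M * (T - t₀ + c * (ρ ^ 2) ^ 2) ^ (-α)) 0 := by
      refine continuousAt_const.mul (ContinuousAt.rpow_const (by fun_prop) (Or.inl ?_))
      simpa using hτp.ne'
    refine (this.eventually_const_lt ?_).filter_mono nhdsWithin_le_nhds
    simpa using mul_lt_mul_of_pos_right hmM (Real.rpow_pos_of_pos hτp (-α))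
  obtain ⟨c, ⟨hcM, hcI⟩, hc⟩ := ((hc1.and hc2).and self_mem_nhdsWithin).exists
  have hc : 0 < c := hc
  have hcomp := comparison n p α hα hpα r T A M c ρ t₀ hρpos (by rw [hρ]; linarith) hA hM hc x₀ u
    (fun t ht => hu_t t (hI t ht)) (fun t ht => hu_x t (hI t ht)) (fun t ht => hineq t (hI t ht))
    ?_ ?_ ?_ hcM
  · refine ⟨M * (c * (ρ ^ 2 - (r / 4) ^ 2) ^ 2) ^ (-α), ?_, ?_⟩
    · have : 0 < ρ ^ 2 - (r / 4) ^ 2 := by rw [hρ]; nlinarith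
      positivity
    · intro t ht x hx
      have hpos : 0 < ρ ^ 2 - (r / 4) ^ 2 := by rw [hρ]; nlinarith
      rw [mem_ball] at hx
      refine (hcomp t ht x (mem_closedBall.2 (by rw [hρ]; linarith))).le.trans ?_
      refine mul_le_mul_of_nonneg_left ?_ hM.le
      refine Real.rpow_le_rpow_of_nonpos (by positivity) ?_ (by linarith)
      have h1 : ‖x - x₀‖ ^ 2 ≤ (r / 4) ^ 2 := by
        rw [← dist_eq_norm]; exact pow_le_pow_left₀ dist_nonneg hx.le 2
      have h2 : (ρ ^ 2 - (r / 4) ^ 2) ^ 2 ≤ (ρ ^ 2 - ‖x - x₀‖ ^ 2) ^ 2 :=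
        pow_le_pow_left₀ hpos.le (by linarith) 2
      have := mul_le_mul_of_nonneg_left h2 hc.le
      linarith [ht.2]
  · intro T' hT'
    refine ⟨α * m * (T - T') ^ (-α - 1), fun t ht x hx => ?_⟩
    have htI : t ∈ Ico t₀ T := ⟨ht.1, lt_of_le_of_lt ht.2 hT'⟩
    refine (hgrow t htI x hx (hbar t htI x hx)).le.trans ?_
    refine mul_le_mul_of_nonneg_left ?_ (by positivity)
    exact Real.rpow_le_rpow_of_nonpos (by linarith) (by linarith [ht.2]) (by linarith)
  · intro t ht x hx
    exact (hbar t ht x hx).trans_lt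
      (mul_lt_mul_of_pos_right hmM (Real.rpow_pos_of_pos (by linarith [ht.2]) _))
  · intro x hx
    refine (hbar t₀ ⟨le_rfl, ht₀T⟩ x (closedBall_subset_ball (by rw [hρ]; linarith) hx)).trans_lt
      (hcI.trans_le ?_)
    refine mul_le_mul_of_nonneg_left ?_ hM.le
    refine Real.rpow_le_rpow_of_nonpos (by positivity) ?_ (by linarith)
    have h1 : ‖x - x₀‖ ^ 2 ≤ ρ ^ 2 := by
      rw [← dist_eq_norm]; exact pow_le_pow_left₀ dist_nonneg (mem_closedBall.1 hx) 2
    have h2 : (ρ ^ 2 - ‖x - x₀‖ ^ 2) ^ 2 ≤ (ρ ^ 2) ^ 2 :=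
      pow_le_pow_left₀ (by linarith) (by linarith [sq_nonneg ‖x - x₀‖]) 2
    have := mul_le_mul_of_nonneg_left h2 hc.le
    linarith
end
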